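/- arXiv:1202.2279 — 10 statements merged into one kernel-verified Lean document; each statement's English description precedes it below -/
import Mathlib

section
/- Assume hypotheses (K). Then for every ε > 0 there exists Q_0 such that for every Q ≥ Q_0 and every tuple (a_0, a_1, …, a_k) ∈ ℤ^{k+1} with (a_0,…,a_k) ≠ (0,…,0) and |a_j| ≤ Q^{τ_j} for every j ∈ {1,…,k}, one has |a_0 + a_1ξ_1 + … + a_kξ_k| ≥ Q^{−1−ε}. -/
lemma aux_dom (k : ℕ) (hk : 1 ≤ k) (x : Fin k → ℝ) (j0 : Fin k)
    (h : ∀ j, j ≠ j0 → 2 * (k : ℝ) * |x j| ≤ |x j0|) : |x j0| / 2 ≤ |∑ j, x j| := by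
  have hk' : (1 : ℝ) ≤ k := by exact_mod_cast hk
  have h1 : ∑ j, x j = x j0 + ∑ j ∈ Finset.univ.erase j0, x j :=
    (Finset.add_sum_erase _ _ (Finset.mem_univ j0)).symm
  have h2 : |∑ j ∈ Finset.univ.erase j0, x j| ≤ |x j0| / 2 := by
    calc |∑ j ∈ Finset.univ.erase j0, x j| ≤ ∑ j ∈ Finset.univ.erase j0, |x j| :=
          Finset.abs_sum_le_sum_abs _ _
      _ ≤ ∑ j ∈ Finset.univ.erase j0, |x j0| / (2 * k) := by
          apply Finset.sum_le_sum
          intro j hj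
          rw [le_div_iff₀ (by positivity)]
          linarith [h j (Finset.ne_of_mem_erase hj)]
      _ ≤ ∑ j : Fin k, |x j0| / (2 * k) :=
          Finset.sum_le_sum_of_subset_of_nonneg (Finset.erase_subset _ _)
            (fun _ _ _ => by positivity)
      _ = |x j0| / 2 := by
          simp
          field_simp
  have h3 := abs_sub_abs_le_abs_sub (x j0) (-∑ j ∈ Finset.univ.erase j0, x j)
  rw [abs_neg, sub_neg_eq_add] at h3
  rw [h1]; linarith

lemma aux_find (Q : ℕ → ℕ) (hQmono : StrictMono Q) (hQpos : ∀ n, 0 < Q n) (c : ℝ)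
    (N : ℕ) (hN : ∀ n, N ≤ n → Real.log (Q (n + 1)) ≤ (1 + c) * Real.log (Q n)) (hc : 0 < c)
    (t : ℝ) (ht : Real.log (Q N) < t) :
    ∃ n, N ≤ n ∧ t ≤ Real.log (Q n) ∧ Real.log (Q n) ≤ (1 + c) * t := by
  have hex : ∃ n, t ≤ Real.log (Q n) := by
    have h1 : Filter.Tendsto (fun n => Real.log (Q n)) Filter.atTop Filter.atTop :=
      Real.tendsto_log_atTop.comp
        (tendsto_natCast_atTop_atTop.comp hQmono.tendsto_atTop)
    exact (h1.eventually_ge_atTop t).exists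
  classical
  have hs := Nat.find_spec hex
  have hm := fun m => Nat.find_min (m := m) hex
  generalize Nat.find hex = n at hs hm
  have hNn : N < n := by
    by_contra hcon
    have h1 : Q n ≤ Q N := hQmono.monotone (not_lt.mp hcon)
    have h2 : Real.log (Q n) ≤ Real.log (Q N) :=
      Real.log_le_log (by exact_mod_cast hQpos n) (by exact_mod_cast h1)
    linarith
  obtain ⟨m, rfl⟩ : ∃ m, n = m + 1 := ⟨n - 1, by omega⟩
  refine ⟨m + 1, hNn.le, hs, ?_⟩
  have h3 := not_le.mp (hm m (by omega))
  have h4 := hN m (by omega)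
  nlinarith

lemma aux_pigeon (k : ℕ) (τs : Fin k → ℝ) (d η c U T lk : ℝ) (hd : 0 < d) (hη : 0 < η) (hc : 0 < c)
    (hd2 : ∀ i j, i ≠ j → d ≤ |τs i - τs j|)
    (hU : U = 1 + ((k * k + 1 : ℕ) + 1) * η)
    (hc1 : c * (1 + (k * k + 1 : ℕ) * η) ≤ η / 2) (hc2 : 16 * (c * U) ≤ d * η)
    (hT : 0 < T) (hT2 : 2 * lk < d * η * T / 4)
    (g : Fin k → ℝ) (u : Fin (k * k + 1) → ℝ) (e : Fin k → Fin (k * k + 1) → ℝ)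
    (he : ∀ j m, |e j m| ≤ c)
    (hu1 : ∀ m : Fin (k * k + 1), (1 + ((m : ℕ) + 1) * η) * T ≤ u m)
    (hu2 : ∀ m : Fin (k * k + 1), u m ≤ (1 + c) * ((1 + ((m : ℕ) + 1) * η) * T)) :
    (∀ m, (1 + η) * T ≤ u m ∧ u m ≤ U * T) ∧
    ∃ m, ∀ i j, i ≠ j → lk < |(g i + (-τs i + e i m) * u m) - (g j + (-τs j + e j m) * u m)| := by
  have hb : ∀ m : Fin (k * k + 1), c * ((1 + ((m : ℕ) + 1) * η) * T) ≤ η * T / 2 := by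
    intro m
    have h1 : (((m : ℕ) : ℝ) + 1) ≤ (k * k + 1 : ℕ) := by exact_mod_cast m.2
    have h2 : c * (1 + ((m : ℕ) + 1) * η) ≤ c * (1 + (k * k + 1 : ℕ) * η) := by gcongr
    have h3 : c * (1 + ((m : ℕ) + 1) * η) * T ≤ η / 2 * T := by gcongr; linarith
    linarith
  have hu : ∀ m, (1 + η) * T ≤ u m ∧ u m ≤ U * T := by
    intro m
    have h1 : (((m : ℕ) : ℝ) + 1) ≤ (k * k + 1 : ℕ) := by exact_mod_cast m.2
    have h0 : (0 : ℝ) ≤ (m : ℕ) := by positivity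
    constructor
    · refine le_trans ?_ (hu1 m)
      have : η * T * (m : ℕ) ≥ 0 := by positivity
      linarith
    · have h2 : (((m : ℕ) : ℝ) + 1) * (η * T) ≤ (k * k + 1 : ℕ) * (η * T) := by gcongr
      have := hu2 m
      have := hb m
      have : 0 < η * T := by positivity
      rw [hU]
      linarith
  refine ⟨hu, ?_⟩
  by_contra hcon
  push Not at hcon
  choose fi fj hne hle using hcon
  obtain ⟨m, m', hmm, hf⟩ := Fintype.exists_ne_map_eq_of_card_lt (fun m => (fi m, fj m))
    (by simp)
  wlog hlt : m < m' generalizing m m'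
  · exact this m' m hmm.symm hf.symm (lt_of_le_of_ne (not_lt.mp hlt) hmm.symm)
  simp only [Prod.mk.injEq] at hf
  have h1 := hle m
  have h2 := hle m'
  rw [← hf.1, ← hf.2] at h2
  have h3 := hd2 _ _ (hne m)
  set i := fi m
  set j := fj m
  have hsep : η * T / 2 ≤ u m' - u m := by
    have h5 : (((m : ℕ) : ℝ) + 1) ≤ (m' : ℕ) := by exact_mod_cast hlt
    have h6 : (((m : ℕ) : ℝ) + 1) * (η * T) ≤ (m' : ℕ) * (η * T) := by gcongr
    have := hu1 m'
    have := hu2 m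
    have := hb m
    linarith
  have hUT : 16 * (c * (U * T)) ≤ d * η * T := by nlinarith
  have hE : ∀ i m, |e i m * u m| ≤ c * (U * T) := by
    intro i m
    have hpos : 0 ≤ u m := le_trans (by positivity) (hu m).1
    rw [abs_mul, abs_of_nonneg hpos]
    exact mul_le_mul (he i m) (hu m).2 hpos hc.le
  have hmain : d * (η * T / 2) ≤ |(τs i - τs j) * (u m' - u m)| := by
    rw [abs_mul]
    refine mul_le_mul h3 (hsep.trans (le_abs_self _)) (by positivity) (abs_nonneg _)
  have a1 := abs_le.mp (hE i m)
  have a2 := abs_le.mp (hE j m)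
  have a3 := abs_le.mp (hE i m')
  have a4 := abs_le.mp (hE j m')
  have a5 := abs_le.mp h1
  have a6 := abs_le.mp h2
  have : |(τs i - τs j) * (u m' - u m)| ≤ 2 * lk + 4 * (c * (U * T)) := by
    rw [abs_le]; constructor <;> linarith [a1.1, a1.2, a2.1, a2.2, a3.1, a3.2, a4.1, a4.2, a5.1, a5.2, a6.1, a6.2]
  linarith

lemma aux_core
    (k : ℕ) (hk : 1 ≤ k) (ξ : Fin k → ℝ)
    (τs : Fin k → ℝ)
    (Q : ℕ → ℕ) (hQmono : StrictMono Q) (hQpos : ∀ n, 0 < Q n)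
    (hQgrowth : Filter.Tendsto (fun n => Real.log (Q (n + 1)) / Real.log (Q n))
      Filter.atTop (nhds 1))
    (l : ℕ → Fin (k + 1) → ℤ)
    (εs : Fin k → ℕ → ℝ) (θs : ℕ → ℝ)
    (hεs : ∀ j, Filter.Tendsto (εs j) Filter.atTop (nhds 0))
    (hθs : Filter.Tendsto θs Filter.atTop (nhds 0))
    (hl : ∀ n : ℕ, 1 ≤ n → ∀ i, |(l n i : ℝ)| ≤ (Q n : ℝ) ^ (1 + θs n))
    (hL : ∀ n : ℕ, 1 ≤ n → ∀ j : Fin k,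
      |(l n (Fin.last k) : ℝ) * ξ j - (l n j.castSucc : ℝ)| =
        (Q n : ℝ) ^ (-τs j + εs j n))
    (d η c U : ℝ) (hd : 0 < d) (hη : 0 < η) (hc : 0 < c)
    (hd1 : ∀ j, d ≤ τs j)
    (hd2 : ∀ i j, i ≠ j → d ≤ |τs i - τs j|)
    (hU : U = 1 + ((k * k + 1 : ℕ) + 1) * η)
    (hc1 : c * (1 + (k * k + 1 : ℕ) * η) ≤ η / 2) (hc2 : 16 * (c * U) ≤ d * η) :
    ∃ T0 : ℝ, 0 < T0 ∧ ∀ T, T0 ≤ T → ∀ a : Fin (k + 1) → ℤ, (∃ j : Fin k, a j.succ ≠ 0) →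
      (∀ j : Fin k, |(a j.succ : ℝ)| ≤ Real.exp (T * τs j)) →
      ∀ j : Fin k, 1 / 2 * |(a j.succ : ℝ)| * Real.exp (-((τs j + 1 + 2 * c) * (U * T))) ≤
        |(a 0 : ℝ) + ∑ j : Fin k, (a j.succ : ℝ) * ξ j| := by
  have hk' : (1 : ℝ) ≤ k := by exact_mod_cast hk
  have hlog : Filter.Tendsto (fun n => Real.log (Q n)) Filter.atTop Filter.atTop :=
      Real.tendsto_log_atTop.comp
        (tendsto_natCast_atTop_atTop.comp hQmono.tendsto_atTop)
  have hev : ∀ᶠ n in Filter.atTop, 1 ≤ n ∧ (∀ j, |εs j n| ≤ c) ∧ |θs n| ≤ c ∧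
      Real.log (Q (n + 1)) ≤ (1 + c) * Real.log (Q n) := by
    have e1 : ∀ᶠ n in Filter.atTop, ∀ j, |εs j n| ≤ c := by
      rw [Filter.eventually_all]
      intro j
      have := (hεs j).eventually (Metric.closedBall_mem_nhds 0 hc)
      simpa [Real.norm_eq_abs] using this
    have e2 : ∀ᶠ n in Filter.atTop, |θs n| ≤ c := by
      have := hθs.eventually (Metric.closedBall_mem_nhds 0 hc)
      simpa [Real.norm_eq_abs] using this
    have e3 := hQgrowth.eventually_le_const (show (1 : ℝ) < 1 + c by linarith)
    filter_upwards [e1, e2, e3, hlog.eventually_gt_atTop 0, Filter.eventually_ge_atTop 1]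
      with n h1 h2 h3 h4 h5
    exact ⟨h5, h1, h2, (div_le_iff₀ h4).mp h3⟩
  obtain ⟨N, hN⟩ := Filter.eventually_atTop.mp hev
  set lk := Real.log (2 * k) with hlk
  have hlk0 : 0 < lk := Real.log_pos (by linarith)
  refine ⟨max (Real.log (Q N)) 0 + 8 * lk / (d * η) + 1, by positivity, ?_⟩
  intro T hT a ha haT
  have hm1 := le_max_left (Real.log (Q N)) 0
  have hm2 := le_max_right (Real.log (Q N)) 0
  have hp : 0 < 8 * lk / (d * η) := by positivity
  have hT0 : 0 < T := by linarith
  have hTN : Real.log (Q N) < T := by linarith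
  have hT2 : 2 * lk < d * η * T / 4 := by
    have : 8 * lk / (d * η) < T := by linarith
    rw [div_lt_iff₀ (by positivity)] at this
    linarith
  have hex : ∀ m : Fin (k * k + 1), ∃ n, N ≤ n ∧ (1 + ((m : ℕ) + 1) * η) * T ≤ Real.log (Q n) ∧
      Real.log (Q n) ≤ (1 + c) * ((1 + ((m : ℕ) + 1) * η) * T) := by
    intro m
    apply aux_find Q hQmono hQpos c N (fun n hn => (hN n hn).2.2.2) hc
    have : 0 ≤ (((m : ℕ) : ℝ) + 1) * η * T := by positivity
    linarith
  choose ν hν1 hν2 hν3 using hex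
  obtain ⟨hu, m, hm⟩ := aux_pigeon k τs d η c U T lk hd hη hc hd2 hU hc1 hc2 hT0 hT2
    (fun j => Real.log |(a j.succ : ℝ)|) (fun m => Real.log (Q (ν m))) (fun j m => εs j (ν m))
    (fun j m => (hN _ (hν1 m)).2.1 j) hν2 hν3
  have hum := hu m
  obtain ⟨hn1, hnε, hnθ, -⟩ := hN _ (hν1 m)
  beta_reduce at hm hum
  set n := ν m
  set u := Real.log (Q n) with hudef
  have hQn : (0 : ℝ) < Q n := by exact_mod_cast hQpos n
  have hu0 : 0 ≤ u := le_trans (by positivity) hum.1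
  set δ : Fin k → ℝ := fun j => (l n (Fin.last k) : ℝ) * ξ j - (l n j.castSucc : ℝ) with hδ
  have hδa : ∀ j, |δ j| = Real.exp ((-τs j + εs j n) * u) := by
    intro j
    rw [hδ]; simp only
    rw [hL n hn1 j, Real.rpow_def_of_pos hQn, mul_comm]
  set x : Fin k → ℝ := fun j => (a j.succ : ℝ) * δ j with hx
  have hxa : ∀ j, |x j| = |(a j.succ : ℝ)| * Real.exp ((-τs j + εs j n) * u) := by
    intro j; rw [hx]; simp only; rw [abs_mul, hδa]
  have hxlog : ∀ j, a j.succ ≠ 0 →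
      |x j| = Real.exp (Real.log |(a j.succ : ℝ)| + (-τs j + εs j n) * u) := by
    intro j hj
    have : (0 : ℝ) < |(a j.succ : ℝ)| := abs_pos.mpr (by exact_mod_cast hj)
    rw [hxa, Real.exp_add, Real.exp_log this]
  have hcu : c * u ≤ d * η * T / 16 := by
    have : c * u ≤ c * (U * T) := by gcongr; exact hum.2
    nlinarith
  have hsmall : ∀ j, |x j| ≤ 1 / (2 * k) := by
    intro j
    have h1 : (1 : ℝ) / (2 * k) = Real.exp (-lk) := by
      rw [Real.exp_neg, hlk, Real.exp_log (by positivity), one_div]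
    rw [h1, hxa]
    calc _ ≤ Real.exp (T * τs j) * Real.exp ((-τs j + εs j n) * u) := by
          gcongr; exact haT j
      _ = Real.exp (T * τs j + (-τs j + εs j n) * u) := (Real.exp_add _ _).symm
      _ ≤ _ := by
          apply Real.exp_le_exp.mpr
          have h2 : εs j n * u ≤ c * u := by
            gcongr; exact (le_abs_self _).trans (hnε j)
          have h3 : τs j * ((1 + η) * T) ≤ τs j * u :=
            mul_le_mul_of_nonneg_left hum.1 (hd.le.trans (hd1 j))
          have h4 : d * (η * T) ≤ τs j * (η * T) := by gcongr; exact hd1 j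
          linarith
  have hS : |∑ j, x j| ≤ 1 / 2 := by
    calc |∑ j, x j| ≤ ∑ j, |x j| := Finset.abs_sum_le_sum_abs _ _
      _ ≤ ∑ j : Fin k, 1 / (2 * (k : ℝ)) := Finset.sum_le_sum (fun j _ => hsmall j)
      _ = 1 / 2 := by
        simp
        field_simp
  have hne : Nonempty (Fin k) := ⟨⟨0, hk⟩⟩
  obtain ⟨j0, hj0⟩ := Finite.exists_max (fun j => |x j|)
  have hj0a : a j0.succ ≠ 0 := by
    intro h0
    obtain ⟨j, hj⟩ := ha
    have h1 := hj0 j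
    have h2 : |x j0| = 0 := by rw [hxa, h0]; simp
    rw [h2, hxlog j hj] at h1
    exact absurd h1 (not_le.mpr (Real.exp_pos _))
  have hdom : |x j0| / 2 ≤ |∑ j, x j| := by
    apply aux_dom k hk x j0
    intro j hj
    by_cases hja : a j.succ = 0
    · have : |x j| = 0 := by rw [hxa, hja]; simp
      rw [this]; simp
    · have h1 := hj0 j
      have h2 := hm j0 j hj.symm
      rw [hxlog j hja, hxlog j0 hj0a] at h1 ⊢
      rw [Real.exp_le_exp] at h1
      rw [abs_of_nonneg (by linarith)] at h2
      have h3 : 2 * (k : ℝ) = Real.exp lk := by rw [hlk, Real.exp_log (by positivity)]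
      rw [h3, ← Real.exp_add]
      apply Real.exp_le_exp.mpr
      linarith
  set Λ : ℝ := (a 0 : ℝ) + ∑ j : Fin k, (a j.succ : ℝ) * ξ j with hΛ
  set p : ℝ := (l n (Fin.last k) : ℝ) with hp
  have hA : ((a 0 * l n (Fin.last k) + ∑ j : Fin k, a j.succ * l n j.castSucc : ℤ) : ℝ)
      = p * Λ - ∑ j, x j := by
    push_cast
    have : ∑ j, x j = p * (∑ j : Fin k, (a j.succ : ℝ) * ξ j) -
        ∑ j : Fin k, (a j.succ : ℝ) * (l n j.castSucc : ℝ) := by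
      rw [Finset.mul_sum, ← Finset.sum_sub_distrib]
      apply Finset.sum_congr rfl
      intro j _
      simp only [hx, hδ]; ring
    rw [this, hΛ]; ring
  have hpΛ : |∑ j, x j| ≤ |p * Λ| := by
    generalize (a 0 * l n (Fin.last k) + ∑ j : Fin k, a j.succ * l n j.castSucc : ℤ) = A at hA
    by_cases hA0 : A = 0
    · rw [hA0] at hA
      have : p * Λ = ∑ j, x j := by push_cast at hA; linarith
      rw [this]
    · have h1 : (1 : ℝ) ≤ |(A : ℝ)| := by exact_mod_cast Int.one_le_abs hA0
      rw [hA] at h1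
      have := abs_sub (p * Λ) (∑ j, x j)
      linarith
  have hpb : |p| ≤ Real.exp ((1 + c) * u) := by
    refine (hl n hn1 _).trans ?_
    rw [Real.rpow_def_of_pos hQn, mul_comm]
    apply Real.exp_le_exp.mpr
    gcongr
    exact (le_abs_self _).trans hnθ
  intro j
  have hfin : 1 / 2 * |(a j.succ : ℝ)| * Real.exp ((-τs j + εs j n) * u)
      ≤ Real.exp ((1 + c) * u) * |Λ| := by
    have h1 := hj0 j
    rw [hxa j] at h1
    have h2 : |p * Λ| ≤ Real.exp ((1 + c) * u) * |Λ| := by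
      rw [abs_mul]; gcongr
    linarith
  have h5 : 1 / 2 * |(a j.succ : ℝ)| * Real.exp ((-τs j + εs j n) * u) * Real.exp (-((1 + c) * u))
      ≤ |Λ| := by
    rw [Real.exp_neg, ← div_eq_mul_inv, div_le_iff₀ (Real.exp_pos _)]
    linarith
  refine le_trans ?_ h5
  rw [mul_assoc _ (Real.exp _) (Real.exp _), ← Real.exp_add]
  gcongr
  have h6 : -c * u ≤ εs j n * u := by
    gcongr; exact (abs_le.mp (hnε j)).1
  have h7 : (τs j + 1 + 2 * c) * u ≤ (τs j + 1 + 2 * c) * (U * T) := by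
    have := hd1 j
    apply mul_le_mul_of_nonneg_left hum.2
    linarith
  linarith

lemma aux_d (k : ℕ) (τs : Fin k → ℝ) (hτpos : ∀ j, 0 < τs j) (hτinj : Function.Injective τs) :
    ∃ d : ℝ, 0 < d ∧ (∀ j, d ≤ τs j) ∧ ∀ i j, i ≠ j → d ≤ |τs i - τs j| := by
  have h : ∀ᶠ d in nhdsWithin (0 : ℝ) (Set.Ioi 0), 0 < d ∧ (∀ j, d ≤ τs j) ∧
      ∀ i j, i ≠ j → d ≤ |τs i - τs j| := by
    refine Filter.Eventually.and self_mem_nhdsWithin (Filter.Eventually.and ?_ ?_)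
    · rw [Filter.eventually_all]
      intro j
      exact (eventually_le_nhds (hτpos j)).filter_mono nhdsWithin_le_nhds
    · rw [Filter.eventually_all]; intro i
      rw [Filter.eventually_all]; intro j
      by_cases hij : i = j
      · simp [hij]
      · have : 0 < |τs i - τs j| := abs_pos.mpr (sub_ne_zero.mpr (fun h => hij (hτinj h)))
        filter_upwards [(eventually_le_nhds this).filter_mono nhdsWithin_le_nhds] with d hd _
        exact hd
  exact h.exists


/-- Under hypotheses (K): for ε > 0 and Q sufficiently large, every nonzero integer tuple
(a_0,…,a_k) with |a_j| ≤ Q^{τ_j} (1 ≤ j ≤ k) satisfies |a_0+a_1ξ_1+…+a_kξ_k| ≥ Q^{-1-ε}. -/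
theorem stmt9
    (k : ℕ) (hk : 1 ≤ k) (ξ : Fin k → ℝ)
    (τs : Fin k → ℝ) (hτpos : ∀ j, 0 < τs j) (hτinj : Function.Injective τs)
    (Q : ℕ → ℕ) (hQmono : StrictMono Q) (hQpos : ∀ n, 0 < Q n)
    (hQgrowth : Filter.Tendsto (fun n => Real.log (Q (n + 1)) / Real.log (Q n))
      Filter.atTop (nhds 1))
    (l : ℕ → Fin (k + 1) → ℤ)
    (εs : Fin k → ℕ → ℝ) (θs : ℕ → ℝ)
    (hεs : ∀ j, Filter.Tendsto (εs j) Filter.atTop (nhds 0))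
    (hθs : Filter.Tendsto θs Filter.atTop (nhds 0))
    (hl : ∀ n : ℕ, 1 ≤ n → ∀ i, |(l n i : ℝ)| ≤ (Q n : ℝ) ^ (1 + θs n))
    (hL : ∀ n : ℕ, 1 ≤ n → ∀ j : Fin k,
      |(l n (Fin.last k) : ℝ) * ξ j - (l n j.castSucc : ℝ)| =
        (Q n : ℝ) ^ (-τs j + εs j n))
    :
    ∀ ε : ℝ, 0 < ε → ∃ Q0 : ℝ, ∀ Qr : ℝ, Q0 ≤ Qr →
      ∀ a : Fin (k + 1) → ℤ, a ≠ 0 →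
        (∀ j : Fin k, |(a j.succ : ℝ)| ≤ Qr ^ τs j) →
        Qr ^ (-1 - ε) ≤ |(a 0 : ℝ) + ∑ j : Fin k, (a j.succ : ℝ) * ξ j| := by
  intro ε hε
  obtain ⟨d, hd, hd1, hd2⟩ := aux_d k τs hτpos hτinj
  obtain ⟨B, hB0, hB⟩ : ∃ B : ℝ, 0 ≤ B ∧ ∀ j, τs j ≤ B :=
    ⟨∑ j, τs j, Finset.sum_nonneg (fun j _ => (hτpos j).le),
      fun j => Finset.single_le_sum (fun j _ => (hτpos j).le) (Finset.mem_univ j)⟩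
  set K : ℝ := ((k * k + 1 : ℕ) : ℝ) with hK
  have hK0 : 0 ≤ K := by positivity
  obtain ⟨η, hη, hηe⟩ : ∃ η : ℝ, 0 < η ∧ (K + 1) * η * (1 + B) = ε / 4 :=
    ⟨ε / 4 / ((K + 1) * (1 + B)), by positivity, by field_simp⟩
  obtain ⟨U, hU⟩ : ∃ U : ℝ, U = 1 + (K + 1) * η := ⟨_, rfl⟩
  have hU1 : 1 ≤ U := by
    have : 0 ≤ (K + 1) * η := by positivity
    linarith
  have hU0 : 0 < U := by linarith
  obtain ⟨c, hc, hc1, hc2, hc3⟩ : ∃ c : ℝ, 0 < c ∧ c * (1 + K * η) ≤ η / 2 ∧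
      16 * (c * U) ≤ d * η ∧ 2 * (c * U) ≤ ε / 4 := by
    obtain ⟨r, hr0, hr1, hr2, hr3⟩ : ∃ r : ℝ, 0 < r ∧ r ≤ η / 2 ∧ r ≤ d * η / 16 ∧ r ≤ ε / 8 :=
      ⟨min (η / 2) (min (d * η / 16) (ε / 8)), by positivity, min_le_left _ _,
        (min_le_right _ _).trans (min_le_left _ _), (min_le_right _ _).trans (min_le_right _ _)⟩
    have hcU : r / U * U = r := by field_simp
    refine ⟨r / U, by positivity, ?_, by linarith, by linarith⟩
    have : r / U * (1 + K * η) ≤ r / U * U := by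
      gcongr; linarith
    linarith
  obtain ⟨T0, hT0, hcore⟩ := aux_core k hk ξ τs Q hQmono hQpos hQgrowth l εs θs hεs hθs hl hL
    d η c U hd hη hc hd1 hd2 hU hc1 hc2
  set T1 := max T0 (2 * Real.log 2 / ε) with hT1
  have hT01 : T0 ≤ T1 := le_max_left _ _
  have hT1p : 0 < T1 := lt_of_lt_of_le hT0 hT01
  have hT1e : Real.log 2 ≤ T1 * (ε / 2) := by
    have : 2 * Real.log 2 / ε ≤ T1 := le_max_right _ _
    rw [div_le_iff₀ hε] at this
    linarith
  have hhalf : (1 : ℝ) / 2 = Real.exp (-Real.log 2) := by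
    rw [Real.exp_neg, Real.exp_log (by norm_num), one_div]
  refine ⟨Real.exp (Real.log 2 + (B + 1 + 2 * c) * (U * T1)), ?_⟩
  intro Qr hQr a ha haQ
  have hQr0 : 0 < Qr := lt_of_lt_of_le (Real.exp_pos _) hQr
  have hlogQ : Real.log 2 + (B + 1 + 2 * c) * (U * T1) ≤ Real.log Qr := by
    rwa [Real.le_log_iff_exp_le hQr0]
  have hlog2 : 0 < Real.log 2 := Real.log_pos (by norm_num)
  have hlogQ0 : 0 ≤ Real.log Qr := by
    refine le_trans ?_ hlogQ
    positivity
  rw [Real.rpow_def_of_pos hQr0]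
  by_cases hz : ∃ j : Fin k, a j.succ ≠ 0
  swap
  · push Not at hz
    have ha0 : a 0 ≠ 0 := by
      intro h0
      apply ha
      funext i
      refine Fin.cases h0 hz i
    have h1 : (1 : ℝ) ≤ |(a 0 : ℝ)| := by exact_mod_cast Int.one_le_abs ha0
    have h2 : ∑ j : Fin k, (a j.succ : ℝ) * ξ j = 0 :=
      Finset.sum_eq_zero (fun j _ => by simp [hz j])
    rw [h2, add_zero]
    refine le_trans ?_ h1
    apply Real.exp_le_one_iff.mpr
    nlinarith
  have hne : Nonempty (Fin k) := ⟨⟨0, hk⟩⟩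
  obtain ⟨j0, hj0⟩ := Finite.exists_max (fun j : Fin k => Real.log |(a j.succ : ℝ)| / τs j)
  have hbd : ∀ T : ℝ, Real.log |(a j0.succ : ℝ)| / τs j0 ≤ T →
      ∀ j : Fin k, |(a j.succ : ℝ)| ≤ Real.exp (T * τs j) := by
    intro T hT j
    by_cases hj : a j.succ = 0
    · rw [hj]; simp; positivity
    · have hpos : (0 : ℝ) < |(a j.succ : ℝ)| := abs_pos.mpr (by exact_mod_cast hj)
      rw [← Real.log_le_iff_le_exp hpos, ← div_le_iff₀ (hτpos j)]
      exact (hj0 j).trans hT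
  by_cases hcase : Real.log |(a j0.succ : ℝ)| / τs j0 ≤ T1
  · obtain ⟨j, hj⟩ := hz
    have h1 := hcore T1 hT01 a ⟨j, hj⟩ (hbd T1 hcase) j
    have h2 : (1 : ℝ) ≤ |(a j.succ : ℝ)| := by exact_mod_cast Int.one_le_abs hj
    refine le_trans ?_ h1
    calc Real.exp (Real.log Qr * (-1 - ε))
        ≤ Real.exp (-Real.log 2 + -((τs j + 1 + 2 * c) * (U * T1))) := by
          apply Real.exp_le_exp.mpr
          have h3 : (τs j + 1 + 2 * c) * (U * T1) ≤ (B + 1 + 2 * c) * (U * T1) := by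
            gcongr; exact hB j
          have h4 : 0 ≤ Real.log Qr * ε := by positivity
          linarith
      _ = 1 / 2 * 1 * Real.exp (-((τs j + 1 + 2 * c) * (U * T1))) := by
          rw [Real.exp_add, ← hhalf, mul_one]
      _ ≤ _ := by gcongr
  · push Not at hcase
    obtain ⟨T, hT⟩ : ∃ T, T = Real.log |(a j0.succ : ℝ)| / τs j0 := ⟨_, rfl⟩
    rw [← hT] at hcase hbd
    have hTp : 0 < T := hT1p.trans hcase
    have hlogT : Real.log |(a j0.succ : ℝ)| = T * τs j0 := by
      rw [hT, div_mul_cancel₀ _ (hτpos j0).ne']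
    have hapos : (0 : ℝ) < |(a j0.succ : ℝ)| := by
      rcases (abs_nonneg (a j0.succ : ℝ)).eq_or_lt with h | h
      · rw [← h, Real.log_zero] at hlogT
        have := mul_pos hTp (hτpos j0)
        linarith
      · exact h
    have habs : |(a j0.succ : ℝ)| = Real.exp (T * τs j0) := by
      rw [← hlogT, Real.exp_log hapos]
    have hTQ : T ≤ Real.log Qr := by
      have h1 := Real.log_le_log hapos (haQ j0)
      rw [Real.log_rpow hQr0, hlogT] at h1
      have := hτpos j0
      nlinarith
    have h1 := hcore T (hT01.trans hcase.le) a hz (hbd T le_rfl) j0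
    refine le_trans ?_ h1
    rw [habs, hhalf, ← Real.exp_add, ← Real.exp_add]
    apply Real.exp_le_exp.mpr
    have h2 : τs j0 * (U - 1) ≤ B * (U - 1) := by
      apply mul_le_mul_of_nonneg_right (hB j0); linarith
    have h3 : (U - 1) * (1 + B) = ε / 4 := by rw [← hηe, hU]; ring
    have h4 : (τs j0 * (U - 1) + U + 2 * (c * U)) * T ≤ (1 + ε / 2) * T := by
      apply mul_le_mul_of_nonneg_right _ hTp.le; linarith
    have h5 : T1 * (ε / 2) ≤ T * (ε / 2) := by gcongr
    have h6 : T * (1 + ε) ≤ Real.log Qr * (1 + ε) := by gcongr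
    linarith
end

section
/- Assume hypotheses (H). Let τ = min(τ_1,…,τ_k) and F = Span_ℝ(e_1,…,e_k). For a nonzero point P ∈ ℝ^p, write P = u + f with u ∈ F^⊥ and f ∈ F, and define Dist(P, F) = ‖u‖/‖P‖ (Euclidean norm). Then for every ε > 0 there exists R_0 such that every P ∈ ℤ^p \ {0} with ‖P‖ ≥ R_0 satisfies Dist(P, F) ≥ ‖P‖^{−1−1/τ−ε}. -/
lemma aux_synd {k : ℕ} (ω φ : Fin k → ℝ) (n0 : ℕ)
    (h0 : ∀ j, Real.cos ((n0 : ℝ) * ω j + φ j) ≠ 0) :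
    ∃ κ : ℝ, 0 < κ ∧ ∃ B : ℕ, ∀ m : ℕ, ∃ n, m ≤ n ∧ n ≤ m + B ∧
      ∀ j, κ ≤ |Real.cos ((n : ℝ) * ω j + φ j)| := by
  classical
  obtain ⟨κ, hκ, hκ'⟩ : ∃ κ : ℝ, 0 < κ ∧ ∀ j, 2 * κ ≤ |Real.cos ((n0 : ℝ) * ω j + φ j)| := by
    have hpos : ∀ j, 0 < |Real.cos ((n0 : ℝ) * ω j + φ j)| := fun j => abs_pos.2 (h0 j)
    rcases isEmpty_or_nonempty (Fin k) with hE | hE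
    · exact ⟨1, one_pos, fun j => (hE.false j).elim⟩
    · obtain ⟨j, hj⟩ := Finite.exists_min (fun j => |Real.cos ((n0 : ℝ) * ω j + φ j)|)
      refine ⟨|Real.cos ((n0 : ℝ) * ω j + φ j)| / 2, by have := hpos j; positivity, fun i => ?_⟩
      have := hj i
      linarith
  let v : ℕ → Fin k → ℂ := fun m j => Complex.exp (((m : ℝ) * ω j : ℝ) * Complex.I)
  have hb : Bornology.IsBounded (Set.range v) := by
    refine (Metric.isBounded_closedBall (x := (0 : Fin k → ℂ)) (r := 1)).subset ?_
    rintro _ ⟨m, rfl⟩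
    rw [mem_closedBall_zero_iff, pi_norm_le_iff_of_nonneg zero_le_one]
    intro j
    exact (Complex.norm_exp_ofReal_mul_I _).le
  have htb : TotallyBounded (Set.range v) := 
    (Bornology.IsBounded.isCompact_closure hb).totallyBounded.subset subset_closure
  obtain ⟨t, hts, htf, hcov⟩ := Metric.finite_approx_of_totallyBounded htb κ hκ
  have : ∀ y ∈ t, ∃ m, v m = y := fun y hy => hts hy
  choose! g hg using this
  obtain ⟨B, hB⟩ : ∃ B, ∀ y ∈ t, g y ≤ B := by
    obtain ⟨B, hB⟩ := (htf.image g).bddAbove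
    exact ⟨B, fun y hy => hB ⟨y, hy, rfl⟩⟩
  refine ⟨κ, hκ, n0 + B, fun m => ?_⟩
  have hm := hcov ⟨m + B, rfl⟩
  simp only [Set.mem_iUnion, Metric.mem_ball] at hm
  obtain ⟨y, hy, hd⟩ := hm
  have hgB := hB y hy
  refine ⟨n0 + (m + B - g y), by omega, by omega, fun j => ?_⟩
  have hdj : dist (v (m + B) j) (y j) < κ := lt_of_le_of_lt (dist_le_pi_dist _ _ j) hd
  rw [← hg y hy, dist_eq_norm] at hdj
  obtain ⟨r, hr⟩ : ∃ r, r + g y = m + B := ⟨m + B - g y, by omega⟩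
  have hr' : m + B - g y = r := by omega
  rw [hr']
  rw [← hr] at hdj
  have key : |Real.cos (((n0 + r : ℕ) : ℝ) * ω j + φ j) - Real.cos ((n0 : ℝ) * ω j + φ j)| < κ := by
    refine lt_of_le_of_lt ?_ hdj
    have e1 : Complex.exp (((((n0 + r : ℕ) : ℝ) * ω j + φ j : ℝ)) * Complex.I) -
        Complex.exp ((((n0 : ℝ) * ω j + φ j : ℝ)) * Complex.I) =
        Complex.exp ((((n0 : ℝ) * ω j + φ j - g y * ω j : ℝ)) * Complex.I) *
          (v (r + g y) j - v (g y) j) := by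
      simp only [v]
      rw [mul_sub, ← Complex.exp_add, ← Complex.exp_add]
      congr 2 <;> · push_cast; ring
    have e2 := congrArg norm e1
    rw [norm_mul, Complex.norm_exp_ofReal_mul_I, one_mul] at e2
    rw [← e2]
    have := Complex.abs_re_le_norm (Complex.exp (((((n0 + r : ℕ) : ℝ) * ω j + φ j : ℝ)) * Complex.I) -
        Complex.exp ((((n0 : ℝ) * ω j + φ j : ℝ)) * Complex.I))
    rwa [Complex.sub_re, Complex.exp_ofReal_mul_I_re, Complex.exp_ofReal_mul_I_re] at this
  have h1 := hκ' j
  have h2 := abs_sub_abs_le_abs_sub (Real.cos ((n0 : ℝ) * ω j + φ j))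
    (Real.cos (((n0 + r : ℕ) : ℝ) * ω j + φ j))
  rw [abs_sub_comm] at h2
  linarith

lemma aux_ratio (q : ℕ → ℝ) (hq : ∀ n, 1 ≤ n → 0 < q n)
    (h : Filter.Tendsto (fun n => q (n + 1) / q n) Filter.atTop (nhds 1)) (b : ℕ) :
    Filter.Tendsto (fun n => q (n + b) / q n) Filter.atTop (nhds 1) := by
  induction b with
  | zero =>
    refine tendsto_const_nhds.congr' ?_
    filter_upwards [Filter.eventually_ge_atTop 1] with n hn
    simp [(hq n hn).ne']
  | succ b ih =>
    have h2 := (h.comp (Filter.tendsto_add_atTop_nat b)).mul ih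
    rw [one_mul] at h2
    refine h2.congr' ?_
    filter_upwards [Filter.eventually_ge_atTop 1] with n hn
    have := (hq n hn).ne'
    have := (hq (n + b) (by omega)).ne'
    simp only [Function.comp]
    rw [← add_assoc]
    field_simp

lemma aux_window (q : ℕ → ℝ) (hmono : StrictMono q) (hq : ∀ n, 1 ≤ n → 0 < q n)
    (htop : Filter.Tendsto q Filter.atTop Filter.atTop)
    (h : Filter.Tendsto (fun n => q (n + 1) / q n) Filter.atTop (nhds 1))
    (Good : ℕ → Prop) (B : ℕ) (hB : ∀ m, ∃ n, m ≤ n ∧ n ≤ m + B ∧ Good n) :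
    ∀ δ : ℝ, 0 < δ → ∀ N : ℕ, ∃ X0 : ℝ, ∀ X, X0 ≤ X → ∃ n, N ≤ n ∧ Good n ∧
      X ≤ q n ∧ q n ≤ (1 + δ) * X := by
  intro δ hδ N
  have h1 := aux_ratio q hq h (B + 1)
  have h2 : ∀ᶠ n in Filter.atTop, q (n + (B + 1)) / q n < 1 + δ :=
    h1.eventually (gt_mem_nhds (by linarith))
  obtain ⟨N1, hN1⟩ := Filter.eventually_atTop.1 h2
  refine ⟨q (N + N1 + 1) + 1, fun X hX => ?_⟩
  classical
  have hex : ∃ n, X ≤ q n := (htop.eventually_ge_atTop X).exists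
  have hn := Nat.find_spec hex
  have hmin := fun m => @Nat.find_min _ _ hex m
  set n := Nat.find hex
  have hnN : N + N1 + 1 < n := by
    by_contra hcon
    have := hmono.monotone (not_lt.1 hcon)
    linarith
  obtain ⟨n', h3, h4, h5⟩ := hB n
  refine ⟨n', by omega, h5, hn.trans (hmono.monotone h3), ?_⟩
  have h6 : q (n - 1) < X := not_le.1 (hmin (n - 1) (by omega))
  have h7 := hN1 (n - 1) (by omega)
  have h8 := hq (n - 1) (by omega)
  rw [div_lt_iff₀ h8] at h7
  have h9 : q n' ≤ q (n - 1 + (B + 1)) := hmono.monotone (by omega)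
  nlinarith

lemma aux_inv {k p : ℕ} (e : Fin k → EuclideanSpace ℝ (Fin p)) :
    ∃ C : ℝ, 0 < C ∧ ∀ f ∈ Submodule.span ℝ (Set.range e), ∃ c : Fin k → ℝ,
      f = ∑ j, c j • e j ∧ ∀ j, |c j| ≤ C * ‖f‖ := by
  let T := Fintype.linearCombination ℝ e
  obtain ⟨g, hg⟩ := T.rangeRestrict.exists_rightInverse_of_surjective T.range_rangeRestrict
  let G := LinearMap.toContinuousLinearMap g
  refine ⟨‖G‖ + 1, by positivity, fun f hf => ?_⟩
  have hf' : f ∈ LinearMap.range T := by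
    rw [Fintype.range_linearCombination]; exact hf
  refine ⟨g ⟨f, hf'⟩, ?_, fun j => ?_⟩
  · have := congrArg Subtype.val (LinearMap.congr_fun hg ⟨f, hf'⟩)
    simp [T, Fintype.linearCombination_apply] at this
    exact this.symm
  · have h1 := norm_le_pi_norm (g ⟨f, hf'⟩) j
    have h2 := G.le_opNorm ⟨f, hf'⟩
    have h3 : ‖g ⟨f, hf'⟩‖ ≤ ‖G‖ * ‖f‖ := h2
    rw [Real.norm_eq_abs] at h1
    nlinarith [norm_nonneg f]

lemma aux_est {k : ℕ} (Q : ℕ → ℕ) (hQpos : ∀ n, 0 < Q n) (τs : Fin k → ℝ)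
    (htop : Filter.Tendsto (fun n => Real.log (Q n)) Filter.atTop Filter.atTop)
    (C : Fin k → ℕ → ℝ) (hC : ∀ j n, |C j n| ≤ 1)
    (εs ηs : Fin k → ℕ → ℝ)
    (hεs : ∀ j, Filter.Tendsto (εs j) Filter.atTop (nhds 0))
    (hηs : ∀ j, Filter.Tendsto (ηs j) Filter.atTop (nhds 0))
    (A : ℕ → Fin k → ℝ)
    (hL : ∀ n : ℕ, 1 ≤ n → ∀ j, |A n j| = (Q n : ℝ) ^ (-τs j + εs j n) * |C j n + ηs j n|)
    (κ : ℝ) (hκ : 0 < κ) (γ : ℝ) (hγ : 0 < γ) :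
    ∃ N : ℕ, ∀ n, N ≤ n → (∀ j, κ ≤ |C j n|) → ∀ j,
      Real.exp (-(τs j + γ) * Real.log (Q n)) ≤ |A n j| ∧
      |A n j| ≤ Real.exp (-(τs j - γ) * Real.log (Q n)) := by
  have e1 : ∀ᶠ n in Filter.atTop, ∀ j, |εs j n| < γ / 2 := by
    refine Filter.eventually_all.2 fun j => ?_
    have := (hεs j).abs
    rw [abs_zero] at this
    exact this.eventually (gt_mem_nhds (by positivity))
  have e2 : ∀ᶠ n in Filter.atTop, ∀ j, |ηs j n| < min (κ / 2) 1 := by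
    refine Filter.eventually_all.2 fun j => ?_
    have := (hηs j).abs
    rw [abs_zero] at this
    exact this.eventually (gt_mem_nhds (by positivity))
  have e3 : ∀ᶠ n in Filter.atTop, max (2 / γ * Real.log 2) (-(2 / γ) * Real.log (κ / 2)) ≤ Real.log (Q n) :=
    htop.eventually_ge_atTop _
  obtain ⟨N, hN⟩ := Filter.eventually_atTop.1 ((e1.and e2).and (e3.and (Filter.eventually_ge_atTop 1)))
  refine ⟨N, fun n hn hg j => ?_⟩
  obtain ⟨⟨h1, h2⟩, h3, h4⟩ := hN n hn
  have h1 := abs_lt.1 (h1 j)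
  have h2 := h2 j
  have hq : (0 : ℝ) < Q n := by exact_mod_cast hQpos n
  have hq0 : 0 ≤ Real.log (Q n) := Real.log_nonneg (by exact_mod_cast hQpos n)
  rw [hL n h4 j, Real.rpow_def_of_pos hq]
  set x := Real.log (Q n)
  have h5 : Real.log 2 ≤ γ / 2 * x := by
    have := (le_max_left _ _).trans h3
    rw [div_mul_eq_mul_div, div_le_iff₀ hγ] at this
    linarith
  have h6 : -(γ / 2 * x) ≤ Real.log (κ / 2) := by
    have := (le_max_right _ _).trans h3
    rw [neg_mul, div_mul_eq_mul_div, neg_le, le_div_iff₀ hγ] at this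
    linarith
  have h7 : |C j n + ηs j n| ≤ Real.exp (γ / 2 * x) := by
    have : (2 : ℝ) ≤ Real.exp (γ / 2 * x) := (Real.log_le_iff_le_exp two_pos).1 h5
    have h8 := abs_add_le (C j n) (ηs j n)
    have := hC j n
    have := h2.le.trans (min_le_right _ _)
    linarith
  have h8 : Real.exp (-(γ / 2 * x)) ≤ |C j n + ηs j n| := by
    have : Real.exp (-(γ / 2 * x)) ≤ κ / 2 := (Real.le_log_iff_exp_le (by positivity)).1 h6
    have h8 := abs_sub_abs_le_abs_sub (C j n) (-ηs j n)
    rw [abs_neg, sub_neg_eq_add] at h8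
    have := hg j
    have := h2.le.trans (min_le_left _ _)
    linarith
  constructor
  · calc _ ≤ Real.exp (x * (-τs j + εs j n)) * Real.exp (-(γ / 2 * x)) := by
          rw [← Real.exp_add]; apply Real.exp_le_exp.2; nlinarith
      _ ≤ _ := by gcongr
  · calc _ ≤ Real.exp (x * (-τs j + εs j n)) * Real.exp (γ / 2 * x) := by gcongr
      _ ≤ _ := by
          rw [← Real.exp_add]; apply Real.exp_le_exp.2; nlinarith

lemma aux_exp (A a : ℝ) (ha : 0 < a) : ∀ᶠ x in Filter.atTop, A ≤ Real.exp (a * x) :=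
  (Real.tendsto_exp_atTop.comp (Filter.tendsto_id.const_mul_atTop ha)).eventually_ge_atTop A

lemma aux_sigma {k : ℕ} (τs : Fin k → ℝ) (h : Function.Injective τs) :
    ∃ σ : ℝ, 0 < σ ∧ ∀ a b, a ≠ b → σ ≤ |τs a - τs b| := by
  classical
  have : ∀ᶠ σ in nhdsWithin (0 : ℝ) (Set.Ioi 0), ∀ a b, a ≠ b → σ ≤ |τs a - τs b| := by
    refine Filter.eventually_all.2 fun a => Filter.eventually_all.2 fun b => ?_
    by_cases hab : a = b
    · simp [hab]
    · have h1 : 0 < |τs a - τs b| := abs_pos.2 (sub_ne_zero.2 (h.ne hab))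
      filter_upwards [nhdsWithin_le_nhds (gt_mem_nhds h1)] with σ hσ _ using le_of_lt hσ
  obtain ⟨σ, h1, h2⟩ := (this.and self_mem_nhdsWithin).exists
  exact ⟨σ, h2, h1⟩

set_option maxHeartbeats 4000000 in
lemma aux_core_s10 {k : ℕ} (τs : Fin k → ℝ) (hinj : Function.Injective τs)
    (τm S : ℝ) (hτm : 0 < τm) (hm : ∀ j, τm ≤ τs j) (hS : ∀ j, τs j ≤ S) (hk : 1 ≤ k)
    (q : ℕ → ℝ) (A : ℕ → Fin k → ℝ) (Good : ℕ → Prop)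
    (hwin : ∀ δ : ℝ, 0 < δ → ∀ N : ℕ, ∃ X0 : ℝ, ∀ X, X0 ≤ X → ∃ n, N ≤ n ∧ Good n ∧
      X ≤ q n ∧ q n ≤ (1 + δ) * X)
    (hA : ∀ γ : ℝ, 0 < γ → ∃ N : ℕ, ∀ n, N ≤ n → Good n → ∀ j,
      Real.exp (-(τs j + γ) * q n) ≤ |A n j| ∧ |A n j| ≤ Real.exp (-(τs j - γ) * q n))
    (δ : ℝ) (hδ : 0 < δ) (hδ1 : δ ≤ 1) (N0 : ℕ) :
    ∀ᶠ x0 in Filter.atTop, ∀ c : Fin k → ℝ, (∀ j, |c j| ≤ Real.exp (τs j * x0)) →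
      (∃ j, |c j| = Real.exp (τs j * x0)) →
      ∃ n, N0 ≤ n ∧ 0 ≤ q n ∧ q n ≤ (1 + 2 * δ) * x0 ∧
        Real.exp (-(4 * S * δ) * x0) ≤ |∑ j, c j * A n j| ∧
        |∑ j, c j * A n j| ≤ 1 / 2 := by
  classical
  obtain ⟨σ, hσ, hσ'⟩ := aux_sigma τs hinj
  have hSm : τm ≤ S := (hm ⟨0, hk⟩).trans (hS ⟨0, hk⟩)
  have hSpos : 0 < S := by linarith
  obtain ⟨N, hNdef⟩ : ∃ N : ℕ, N = k * k + 1 := ⟨_, rfl⟩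
  have hN : (0 : ℝ) < N := by rw [hNdef]; positivity
  obtain ⟨d, hd⟩ : ∃ d : ℝ, d = δ / N := ⟨_, rfl⟩
  have hdpos : 0 < d := by rw [hd]; positivity
  have hdN : d * N = δ := by rw [hd]; field_simp
  obtain ⟨β, hβ⟩ : ∃ β : ℝ, β = σ * d / 8 := ⟨_, rfl⟩
  have hβpos : 0 < β := by rw [hβ]; positivity
  obtain ⟨γ, hγ, hγ1, hγ2⟩ : ∃ γ : ℝ, 0 < γ ∧ γ ≤ β / 12 ∧ γ ≤ τm * δ / 6 :=
    ⟨min (β / 12) (τm * δ / 6), by positivity, min_le_left _ _, min_le_right _ _⟩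
  obtain ⟨N1, hN1⟩ := hA γ hγ
  obtain ⟨X0, hX0⟩ := hwin (d / 6) (by positivity) (N0 + N1)
  filter_upwards [Filter.eventually_ge_atTop X0, Filter.eventually_ge_atTop 1,
    aux_exp (2 * k) (β / 2) (by positivity), aux_exp (2 * k) (τm * δ / 2) (by positivity),
    aux_exp 2 (S * δ) (by positivity)] with x0 hx0 hx1 hE1 hE2 hE3
  intro c hc hc'
  have hx0p : 0 < x0 := by linarith
  have hwin' : ∀ i : Fin N, ∃ n, N0 + N1 ≤ n ∧ Good n ∧
      x0 * (1 + δ + d * (i : ℕ)) ≤ q n ∧ q n ≤ (1 + d / 6) * (x0 * (1 + δ + d * (i : ℕ))) := by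
    intro i
    refine hX0 _ (hx0.trans ?_)
    have : 0 ≤ δ + d * (i : ℕ) := by positivity
    nlinarith
  choose n hn1 hn2 hn3 hn4 using hwin'
  have hup : ∀ i : Fin N, q (n i) ≤ x0 * (1 + δ + d * (i : ℕ)) + d * x0 / 2 := by
    intro i
    have h1 := hn4 i
    have h2 : ((i : ℕ) : ℝ) ≤ N := by exact_mod_cast i.2.le
    have h3 : d * (i : ℕ) ≤ δ := by rw [← hdN]; gcongr
    have h4 : x0 * (1 + δ + d * (i : ℕ)) ≤ 3 * x0 := by nlinarith
    nlinarith
  have hgood : ∃ i : Fin N, ∀ a b, a ≠ b → c a ≠ 0 → c b ≠ 0 →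
      β * x0 ≤ |Real.log |c a| - Real.log |c b| - (τs a - τs b) * q (n i)| := by
    by_contra! hcon
    choose a b hab hca hcb hlt using hcon
    obtain ⟨i, i', hne, heq⟩ := Fintype.exists_ne_map_eq_of_card_lt
      (fun i => (a i, b i)) (by simp [hNdef])
    have main : ∀ i i' : Fin N, i < i' → (a i, b i) = (a i', b i') → False := by
      intro i i' hlt' heq
      have ha : a i = a i' := congrArg Prod.fst heq
      have hb : b i = b i' := congrArg Prod.snd heq
      have h1 := hlt i
      have h2 := hlt i'
      rw [← ha, ← hb] at h2
      have h3 := hσ' _ _ (hab i)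
      have h4 : ((i : ℕ) : ℝ) + 1 ≤ (i' : ℕ) := by exact_mod_cast hlt'
      have h5 : d * x0 / 2 ≤ q (n i') - q (n i) := by
        have h6 := hup i
        have h7 := hn3 i'
        have h8 : x0 * (d * (((i : ℕ) : ℝ) + 1)) ≤ x0 * (d * (i' : ℕ)) := by gcongr
        nlinarith
      have h9 : |(τs (a i) - τs (b i)) * (q (n i') - q (n i))| < 2 * (β * x0) := by
        rw [abs_lt] at h1 h2 ⊢
        constructor <;> nlinarith
      rw [abs_mul] at h9
      have h10 : σ * (d * x0 / 2) ≤ |τs (a i) - τs (b i)| * |q (n i') - q (n i)| := by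
        gcongr
        exact h5.trans (le_abs_self _)
      have : 0 < σ * d * x0 := by positivity
      rw [hβ] at h9
      nlinarith
    rcases lt_or_gt_of_ne hne with h | h
    · exact main _ _ h heq
    · exact main _ _ h heq.symm
  obtain ⟨i, hi⟩ := hgood
  have hxlo : (1 + δ) * x0 ≤ q (n i) := by
    have h1 := hn3 i
    have : 0 ≤ x0 * (d * (i : ℕ)) := by positivity
    nlinarith
  have hxhi : q (n i) ≤ (1 + 2 * δ) * x0 := by
    have h1 := hup i
    have h2 : ((i : ℕ) : ℝ) + 1 ≤ N := by exact_mod_cast i.2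
    have h3 : x0 * (d * (((i : ℕ) : ℝ) + 1)) ≤ x0 * (d * N) := by gcongr
    rw [hdN] at h3
    have : 0 < d * x0 := by positivity
    nlinarith
  have hest := hN1 (n i) (by have := hn1 i; omega) (hn2 i)
  have hn0 : N0 ≤ n i := by have := hn1 i; omega
  refine ⟨n i, hn0, by nlinarith, hxhi, ?_⟩
  set x := q (n i)
  set B := A (n i)
  have hx3 : x ≤ 3 * x0 := by nlinarith
  have hγx : γ * x ≤ 3 * γ * x0 := by nlinarith
  obtain ⟨j0, hj0⟩ := hc'
  have hj0ne : c j0 ≠ 0 := by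
    intro h; rw [h, abs_zero] at hj0; exact (Real.exp_pos _).ne hj0
  obtain ⟨js, hjs, hmax⟩ := Finset.exists_max_image (Finset.univ.filter (fun j => c j ≠ 0))
    (fun j => Real.log |c j| - τs j * x) ⟨j0, by simp [hj0ne]⟩
  have hjs : c js ≠ 0 := by simpa using hjs
  have hmax : ∀ j, c j ≠ 0 → Real.log |c j| - τs j * x ≤ Real.log |c js| - τs js * x :=
    fun j hj => hmax j (by simpa using hj)
  obtain ⟨Mx, hMx⟩ : ∃ Mx, Mx = Real.log |c js| - τs js * x := ⟨_, rfl⟩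
  rw [← hMx] at hmax
  have hMlo : -(2 * S * δ) * x0 ≤ Mx := by
    have h1 := hmax j0 hj0ne
    rw [hj0, Real.log_exp] at h1
    have h2 := hS j0
    have h3 := hm j0
    have h4 : τs j0 * (x - x0) ≤ S * (2 * δ * x0) := by
      apply mul_le_mul h2 <;> nlinarith
    nlinarith
  have hMhi : Mx ≤ -(τm * δ) * x0 := by
    have h1 : Real.log |c js| ≤ τs js * x0 := by
      rw [Real.log_le_iff_le_exp (abs_pos.2 hjs)]; exact hc js
    have h3 := hm js
    have h4 : τm * (δ * x0) ≤ τs js * (x - x0) := by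
      apply mul_le_mul h3 <;> nlinarith
    nlinarith
  have hterm : ∀ j, c j ≠ 0 → |c j * B j| ≤ Real.exp (Real.log |c j| - τs j * x + 3 * γ * x0) := by
    intro j hj
    rw [abs_mul]
    calc |c j| * |B j| ≤ |c j| * Real.exp (-(τs j - γ) * x) := by gcongr; exact (hest j).2
      _ = Real.exp (Real.log |c j| + -(τs j - γ) * x) := by
          rw [Real.exp_add, Real.exp_log (abs_pos.2 hj)]
      _ ≤ _ := by apply Real.exp_le_exp.2; linarith
  have htermlo : Real.exp (Mx - 3 * γ * x0) ≤ |c js * B js| := by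
    rw [abs_mul]
    calc Real.exp (Mx - 3 * γ * x0) ≤ Real.exp (Real.log |c js| + -(τs js + γ) * x) := by
          apply Real.exp_le_exp.2; linarith
      _ = |c js| * Real.exp (-(τs js + γ) * x) := by
          rw [Real.exp_add, Real.exp_log (abs_pos.2 hjs)]
      _ ≤ _ := by gcongr; exact (hest js).1
  constructor
  · have hsmall : ∀ j ∈ Finset.univ.erase js, |c j * B j| ≤ Real.exp (Mx - β * x0 + 3 * γ * x0) := by
      intro j hj
      have hj : j ≠ js := by simpa using hj
      by_cases hcj : c j = 0
      · rw [hcj, zero_mul, abs_zero]; positivity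
      · refine (hterm j hcj).trans (Real.exp_le_exp.2 ?_)
        have h1 := hi j js hj hcj hjs
        have h2 := hmax j hcj
        have h3 : Real.log |c j| - Real.log |c js| - (τs j - τs js) * x ≤ 0 := by
          rw [hMx] at h2; linarith
        rw [abs_of_nonpos h3] at h1
        rw [hMx]; linarith
    have hsum : |∑ j ∈ Finset.univ.erase js, c j * B j| ≤
        k * Real.exp (Mx - β * x0 + 3 * γ * x0) := by
      refine (Finset.abs_sum_le_sum_abs _ _).trans
        ((Finset.sum_le_card_nsmul _ _ _ hsmall).trans ?_)
      rw [nsmul_eq_mul]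
      gcongr
      simpa using Finset.card_le_univ (Finset.univ.erase js)
    have hhalf : k * Real.exp (Mx - β * x0 + 3 * γ * x0) ≤ Real.exp (Mx - 3 * γ * x0) / 2 := by
      have h1 : Real.exp (Mx - β * x0 + 3 * γ * x0) * Real.exp (β / 2 * x0) ≤
          Real.exp (Mx - 3 * γ * x0) := by
        rw [← Real.exp_add]; apply Real.exp_le_exp.2; nlinarith
      have h2 : Real.exp (Mx - β * x0 + 3 * γ * x0) * (2 * k) ≤
        Real.exp (Mx - β * x0 + 3 * γ * x0) * Real.exp (β / 2 * x0) := by gcongr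
      linarith
    have hfin : Real.exp (-(4 * S * δ) * x0) ≤ Real.exp (Mx - 3 * γ * x0) / 2 := by
      have h1 : Real.exp (-(4 * S * δ) * x0) * Real.exp (S * δ * x0) ≤ Real.exp (Mx - 3 * γ * x0) := by
        rw [← Real.exp_add]; apply Real.exp_le_exp.2
        have : γ ≤ S * δ / 6 := by nlinarith
        nlinarith [mul_pos (mul_pos hSpos hδ) hx0p]
      have h2 : Real.exp (-(4 * S * δ) * x0) * 2 ≤
        Real.exp (-(4 * S * δ) * x0) * Real.exp (S * δ * x0) := by gcongr
      linarith
    rw [← Finset.add_sum_erase _ _ (Finset.mem_univ js)]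
    have h3 := abs_sub_abs_le_abs_sub (c js * B js) (-∑ j ∈ Finset.univ.erase js, c j * B j)
    rw [abs_neg, sub_neg_eq_add] at h3
    linarith
  · have hall : ∀ j ∈ Finset.univ, |c j * B j| ≤ Real.exp (-(τm * δ / 2) * x0) := by
      intro j _
      by_cases hcj : c j = 0
      · rw [hcj, zero_mul, abs_zero]; positivity
      · refine (hterm j hcj).trans (Real.exp_le_exp.2 ?_)
        have h2 := hmax j hcj
        nlinarith
    refine (Finset.abs_sum_le_sum_abs _ _).trans
        ((Finset.sum_le_card_nsmul _ _ _ hall).trans ?_)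
    rw [nsmul_eq_mul, Finset.card_univ, Fintype.card_fin, neg_mul, Real.exp_neg,
      ← div_eq_mul_inv, div_le_iff₀ (Real.exp_pos _)]
    linarith

lemma aux_ratio1 (q : ℕ → ℝ) (hmono : StrictMono q) (hq : ∀ n, 1 ≤ n → 0 < q n) (M : ℝ)
    (h : ∀ n : ℕ, 1 ≤ n → q (n + 1) ≤ (1 + M / n) * q n) :
    Filter.Tendsto (fun n => q (n + 1) / q n) Filter.atTop (nhds 1) := by
  have h1 : Filter.Tendsto (fun n : ℕ => 1 + M / (n : ℝ)) Filter.atTop (nhds 1) := by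
    simpa using (tendsto_const_div_atTop_nhds_zero_nat M).const_add 1
  refine tendsto_of_tendsto_of_tendsto_of_le_of_le' tendsto_const_nhds h1 ?_ ?_
  · filter_upwards [Filter.eventually_ge_atTop 1] with n hn
    rw [le_div_iff₀ (hq n hn), one_mul]
    exact hmono.monotone (by omega)
  · filter_upwards [Filter.eventually_ge_atTop 1] with n hn
    rw [div_le_iff₀ (hq n hn)]
    exact h n hn

set_option maxHeartbeats 4000000 in
/-- Under hypotheses (H), with τ = min(τ_1,…,τ_k) and F = Span_ℝ(e_1,…,e_k): for every
ε > 0 and every nonzero integer point P with ‖P‖ large enough, writing P = u + f with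
u ∈ F^⊥ and f ∈ F, one has ‖u‖/‖P‖ ≥ ‖P‖^{-1-1/τ-ε}. -/
theorem stmt10
    (k p : ℕ) (hk : 1 ≤ k) (hkp : k ≤ p - 1)
    (e : Fin k → EuclideanSpace ℝ (Fin p))
    (τs ωs φs : Fin k → ℝ)
    (hτpos : ∀ j, 0 < τs j) (hτinj : Function.Injective τs)
    (hosc : {n : ℕ | ∀ j : Fin k, ∀ m : ℤ,
      (n : ℝ) * ωs j + φs j ≠ Real.pi / 2 + m * Real.pi}.Infinite)
    (Q : ℕ → ℕ) (hQmono : StrictMono Q) (hQpos : ∀ n, 0 < Q n)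
    (hQgrowth :
      (∃ M : ℝ, 0 < M ∧ ∀ n : ℕ, 1 ≤ n →
        Real.log (Q (n + 1)) ≤ (1 + M / n) * Real.log (Q n)) ∨
      ((∀ j, ωs j = 0) ∧
        Filter.Tendsto (fun n => Real.log (Q (n + 1)) / Real.log (Q n))
          Filter.atTop (nhds 1)))
    (l : ℕ → Fin p → ℤ)
    (εs ηs : Fin k → ℕ → ℝ) (θs : ℕ → ℝ)
    (hεs : ∀ j, Filter.Tendsto (εs j) Filter.atTop (nhds 0))
    (hηs : ∀ j, Filter.Tendsto (ηs j) Filter.atTop (nhds 0))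
    (hθs : Filter.Tendsto θs Filter.atTop (nhds 0))
    (hL : ∀ n : ℕ, 1 ≤ n → ∀ j,
      |∑ i, (l n i : ℝ) * e j i| =
        (Q n : ℝ) ^ (-τs j + εs j n) * |Real.cos ((n : ℝ) * ωs j + φs j) + ηs j n|)
    (hl : ∀ n : ℕ, 1 ≤ n → ∀ i, |(l n i : ℝ)| ≤ (Q n : ℝ) ^ (1 + θs n))
    :
    ∀ ε : ℝ, 0 < ε → ∃ R0 : ℝ, ∀ P : EuclideanSpace ℝ (Fin p),
      (∀ i, ∃ m : ℤ, P i = (m : ℝ)) → P ≠ 0 → R0 ≤ ‖P‖ →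
      ∀ u f : EuclideanSpace ℝ (Fin p),
        u ∈ (Submodule.span ℝ (Set.range e))ᗮ →
        f ∈ Submodule.span ℝ (Set.range e) →
        P = u + f →
        ‖P‖ ^ (-1 - 1 / (⨅ j, τs j) - ε) ≤ ‖u‖ / ‖P‖ := by
  classical
  intro ε hε
  haveI : Nonempty (Fin k) := ⟨⟨0, hk⟩⟩
  obtain ⟨τ, hτ⟩ : ∃ τ, τ = ⨅ j, τs j := ⟨_, rfl⟩
  rw [← hτ]
  have hτle : ∀ j, τ ≤ τs j := fun j => hτ ▸ ciInf_le (Set.finite_range τs).bddBelow j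
  have hτ0 : 0 < τ := by
    obtain ⟨j, hj⟩ := exists_eq_ciInf_of_finite (f := τs)
    rw [hτ, ← hj]; exact hτpos j
  obtain ⟨jS, hjS⟩ := Finite.exists_max τs
  obtain ⟨S, hS⟩ : ∃ S, S = τs jS := ⟨_, rfl⟩
  rw [← hS] at hjS
  have hS0 : 0 < S := hS ▸ hτpos jS
  have hQR : ∀ n, (0 : ℝ) < Q n := fun n => by exact_mod_cast hQpos n
  obtain ⟨q, hqdef⟩ : ∃ q : ℕ → ℝ, q = fun n => Real.log (Q n) := ⟨_, rfl⟩
  have hqn : ∀ n, Real.log (Q n) = q n := fun n => by rw [hqdef]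
  have hqmono : StrictMono q := by
    intro a b hab
    rw [← hqn, ← hqn]
    exact Real.log_lt_log (hQR a) (by exact_mod_cast hQmono hab)
  have hq0 : 0 ≤ q 0 := by
    rw [← hqn]; exact Real.log_nonneg (by exact_mod_cast hQpos 0)
  have hqpos : ∀ n, 1 ≤ n → 0 < q n := fun n hn => lt_of_le_of_lt hq0 (hqmono hn)
  have hqtop : Filter.Tendsto q Filter.atTop Filter.atTop := by
    rw [hqdef]
    exact Real.tendsto_log_atTop.comp (tendsto_natCast_atTop_atTop.comp hQmono.tendsto_atTop)
  have hratio : Filter.Tendsto (fun n => q (n + 1) / q n) Filter.atTop (nhds 1) := by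
    rcases hQgrowth with ⟨M, _, hM⟩ | ⟨_, h⟩
    · refine aux_ratio1 q hqmono hqpos M fun n hn => ?_
      have := hM n hn
      rwa [hqn, hqn] at this
    · rw [hqdef]; exact h
  obtain ⟨n0, hn0⟩ := hosc.nonempty
  obtain ⟨κ, hκ, B, hB⟩ := aux_synd ωs φs n0 (by
    intro j h
    rw [Real.cos_eq_zero_iff] at h
    obtain ⟨m, hm⟩ := h
    exact hn0 j m (by rw [hm]; ring))
  have hwin := aux_window q hqmono hqpos hqtop hratio _ B hB
  have hA : ∀ γ : ℝ, 0 < γ → ∃ N : ℕ, ∀ n, N ≤ n →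
      (∀ j, κ ≤ |Real.cos ((n : ℝ) * ωs j + φs j)|) → ∀ j,
      Real.exp (-(τs j + γ) * q n) ≤ |∑ i, (l n i : ℝ) * e j i| ∧
      |∑ i, (l n i : ℝ) * e j i| ≤ Real.exp (-(τs j - γ) * q n) := by
    intro γ hγ
    have := aux_est Q hQpos τs (by rw [← hqdef]; exact hqtop)
      (fun j n => Real.cos ((n : ℝ) * ωs j + φs j)) (fun j n => Real.abs_cos_le_one _) εs ηs hεs hηs
      (fun n j => ∑ i, (l n i : ℝ) * e j i) hL κ hκ γ hγ
    simpa only [hqn] using this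
  obtain ⟨δ, hδ, hδ1, hδ2⟩ : ∃ δ : ℝ, 0 < δ ∧ δ ≤ 1 ∧ (2 * (6 + 4 * S) + 1) * δ ≤ ε * τ := by
    refine ⟨min 1 (ε * τ / (2 * (6 + 4 * S) + 1)), by positivity, min_le_left _ _, ?_⟩
    rw [← le_div_iff₀' (by positivity)]
    exact min_le_right _ _
  obtain ⟨N0, hN0⟩ := Filter.eventually_atTop.1
    ((hθs.eventually (gt_mem_nhds hδ)).and (Filter.eventually_ge_atTop 1))
  have hcore := aux_core_s10 τs hτinj τ S hτ0 hτle hjS hk q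
    (fun n j => ∑ i, (l n i : ℝ) * e j i) _ hwin hA δ hδ hδ1 N0
  obtain ⟨X1, hX1⟩ := Filter.eventually_atTop.1 (hcore.and ((aux_exp p δ hδ).and
    ((aux_exp 2 (4 * S * δ) (by positivity)).and (Filter.eventually_ge_atTop 1))))
  obtain ⟨X, hXX, hX0⟩ : ∃ X, X1 ≤ X ∧ 0 ≤ X := ⟨max X1 0, le_max_left _ _, le_max_right _ _⟩
  obtain ⟨C, hC, hCf⟩ := aux_inv e
  refine ⟨max 2 (max (Real.exp (Real.log (2 * C) / δ))
    (2 + Real.exp (S * X) * ∑ j, ‖e j‖)), ?_⟩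
  intro P hPint hP0 hPR u f _ hf hPuf
  have hP2 : 2 ≤ ‖P‖ := (le_max_left _ _).trans hPR
  have hPa := (le_max_left _ _).trans ((le_max_right _ _).trans hPR)
  have hPb := (le_max_right _ _).trans ((le_max_right _ _).trans hPR)
  have hPpos : 0 < ‖P‖ := by linarith
  obtain ⟨Λ, hΛ⟩ : ∃ Λ, Λ = Real.log ‖P‖ := ⟨_, rfl⟩
  have hexpΛ : ‖P‖ = Real.exp Λ := by rw [hΛ, Real.exp_log hPpos]
  have hΛ0 : 0 < Λ := by rw [hΛ]; exact Real.log_pos (by linarith)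
  rw [le_div_iff₀ hPpos, Real.rpow_def_of_pos hPpos, ← hΛ]
  nth_rewrite 1 [hexpΛ]
  rw [← Real.exp_add]
  have hexp : Λ * (-1 - 1 / τ - ε) + Λ = -(1 / τ + ε) * Λ := by ring
  rw [hexp]
  rcases le_or_gt 1 ‖u‖ with hu | hu
  · refine le_trans (Real.exp_le_one_iff.2 ?_) hu
    have : 0 < (1 / τ + ε) * Λ := by positivity
    linarith
  obtain ⟨c, hfc, hcC⟩ := hCf f hf
  have hfP : ‖f‖ ≤ 2 * ‖P‖ := by
    have : f = P - u := by rw [hPuf]; abel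
    rw [this]
    have := norm_sub_le P u
    linarith
  have hPf : ‖P‖ ≤ 1 + ‖f‖ := by
    have := norm_add_le u f
    rw [← hPuf] at this
    linarith
  have hcup : ∀ j, |c j| ≤ Real.exp ((1 + δ) * Λ) := by
    intro j
    have h1 : 2 * C ≤ Real.exp (δ * Λ) := by
      rw [← Real.log_le_iff_le_exp (by positivity)]
      rw [hexpΛ, Real.exp_le_exp, div_le_iff₀ hδ] at hPa
      linarith
    calc |c j| ≤ C * ‖f‖ := hcC j
      _ ≤ C * (2 * ‖P‖) := by gcongr
      _ = (2 * C) * Real.exp Λ := by rw [hexpΛ]; ring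
      _ ≤ Real.exp (δ * Λ) * Real.exp Λ := by gcongr
      _ = _ := by rw [← Real.exp_add]; ring_nf
  obtain ⟨j0, hj0⟩ := Finite.exists_max (fun j => Real.log |c j| / τs j)
  obtain ⟨x0, hx0⟩ : ∃ x0, x0 = Real.log |c j0| / τs j0 := ⟨_, rfl⟩
  have hj0 : ∀ j, Real.log |c j| / τs j ≤ x0 := fun j => hx0 ▸ hj0 j
  have hcle : ∀ j, |c j| ≤ Real.exp (τs j * x0) := by
    intro j
    by_cases hcj : c j = 0
    · rw [hcj, abs_zero]; positivity
    · rw [← Real.log_le_iff_le_exp (abs_pos.2 hcj)]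
      have := hj0 j
      rw [div_le_iff₀ (hτpos j)] at this
      linarith
  have hXx : X ≤ x0 := by
    by_contra! hlt
    have h1 : ‖f‖ ≤ Real.exp (S * X) * ∑ j, ‖e j‖ := by
      rw [hfc, Finset.mul_sum]
      refine (norm_sum_le _ _).trans (Finset.sum_le_sum fun j _ => ?_)
      rw [norm_smul, Real.norm_eq_abs]
      gcongr
      refine (hcle j).trans (Real.exp_le_exp.2 ?_)
      have := hτpos j
      have := hjS j
      nlinarith
    linarith
  obtain ⟨hc1, hpx, h2x, hx1⟩ := hX1 x0 (hXX.trans hXx)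
  have hcj0 : c j0 ≠ 0 := by
    intro h
    rw [h, abs_zero, Real.log_zero, zero_div] at hx0
    linarith
  have hcj0e : |c j0| = Real.exp (τs j0 * x0) := by
    rw [hx0, mul_div_cancel₀ _ (hτpos j0).ne', Real.exp_log (abs_pos.2 hcj0)]
  obtain ⟨n, hn, hqn0, hqn1, hlo, hhi⟩ := hc1 c hcle ⟨j0, hcj0e⟩
  obtain ⟨hθ, hn1⟩ := hN0 n hn
  have hLf : ∑ j, c j * (∑ i, (l n i : ℝ) * e j i) = ∑ i, (l n i : ℝ) * f i := by
    rw [hfc]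
    simp only [Finset.mul_sum, WithLp.ofLp_sum, WithLp.ofLp_smul, Finset.sum_apply, Pi.smul_apply,
      smul_eq_mul]
    rw [Finset.sum_comm]
    refine Finset.sum_congr rfl fun i _ => Finset.sum_congr rfl fun j _ => by ring
  rw [hLf] at hlo hhi
  have hLP : ∑ i, (l n i : ℝ) * P i = ∑ i, (l n i : ℝ) * u i + ∑ i, (l n i : ℝ) * f i := by
    rw [← Finset.sum_add_distrib]
    refine Finset.sum_congr rfl fun i _ => ?_
    rw [hPuf, PiLp.add_apply]; ring
  obtain ⟨z, hz⟩ : ∃ z : ℤ, ∑ i, (l n i : ℝ) * P i = z := by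
    choose m hm using hPint
    exact ⟨∑ i, l n i * m i, by push_cast; simp [hm]⟩
  have hLu : Real.exp (-(4 * S * δ) * x0) ≤ |∑ i, (l n i : ℝ) * u i| := by
    rw [hz] at hLP
    have h3 : ∑ i, (l n i : ℝ) * u i = z - ∑ i, (l n i : ℝ) * f i := by linarith
    rw [h3]
    by_cases hz0 : z = 0
    · rw [hz0, Int.cast_zero, zero_sub, abs_neg]; exact hlo
    · have h4 : (1 : ℝ) ≤ |(z : ℝ)| := by
        exact_mod_cast Int.one_le_abs hz0
      have h5 := abs_sub_abs_le_abs_sub (z : ℝ) (∑ i, (l n i : ℝ) * f i)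
      linarith
  have hLu2 : |∑ i, (l n i : ℝ) * u i| ≤ Real.exp ((1 + 6 * δ) * x0) * ‖u‖ := by
    have h1 : ∀ i ∈ Finset.univ, |(l n i : ℝ) * u i| ≤ Real.exp ((1 + 5 * δ) * x0) * ‖u‖ := by
      intro i _
      rw [abs_mul]
      have h2 : |u i| ≤ ‖u‖ := by
        have := PiLp.norm_apply_le u i
        rwa [Real.norm_eq_abs] at this
      have h3 := hl n hn1 i
      rw [Real.rpow_def_of_pos (hQR n), hqn] at h3
      have h4 : q n * (1 + θs n) ≤ (1 + 5 * δ) * x0 := by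
        have : q n * (1 + θs n) ≤ q n * (1 + δ) := by gcongr
        have : q n * (1 + δ) ≤ (1 + 2 * δ) * x0 * (1 + δ) := by gcongr
        have : δ * δ * x0 ≤ δ * 1 * x0 := by gcongr
        nlinarith
      have h5 := h3.trans (Real.exp_le_exp.2 h4)
      gcongr
    refine (Finset.abs_sum_le_sum_abs _ _).trans
        ((Finset.sum_le_card_nsmul _ _ _ h1).trans ?_)
    rw [nsmul_eq_mul, Finset.card_univ, Fintype.card_fin, ← mul_assoc]
    gcongr
    calc (p : ℝ) * Real.exp ((1 + 5 * δ) * x0) ≤ Real.exp (δ * x0) * Real.exp ((1 + 5 * δ) * x0) := by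
          gcongr
      _ = _ := by rw [← Real.exp_add]; ring_nf
  have hufin : Real.exp (-(1 + (6 + 4 * S) * δ) * x0) ≤ ‖u‖ := by
    have h1 := hLu.trans hLu2
    have h2 : Real.exp (-(4 * S * δ) * x0) =
        Real.exp ((1 + 6 * δ) * x0) * Real.exp (-(1 + (6 + 4 * S) * δ) * x0) := by
      rw [← Real.exp_add]; ring_nf
    rw [h2] at h1
    exact le_of_mul_le_mul_left h1 (Real.exp_pos _)
  refine le_trans (Real.exp_le_exp.2 ?_) hufin
  have hτx : τ * x0 ≤ (1 + δ) * Λ := by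
    have h1 := hcup j0
    rw [hcj0e, Real.exp_le_exp] at h1
    have := hτle j0
    nlinarith
  have h1 : (1 + (6 + 4 * S) * δ) * (τ * x0) ≤ (1 + ε * τ) * Λ := by
    have h2 : (1 + (6 + 4 * S) * δ) * (τ * x0) ≤ (1 + (6 + 4 * S) * δ) * ((1 + δ) * Λ) := by gcongr
    have h3 : (1 + (6 + 4 * S) * δ) * (1 + δ) ≤ 1 + ε * τ := by
      have : (6 + 4 * S) * δ * δ ≤ (6 + 4 * S) * δ * 1 := by gcongr
      nlinarith
    have h4 : (1 + (6 + 4 * S) * δ) * (1 + δ) * Λ ≤ (1 + ε * τ) * Λ := by gcongr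
    linarith
  have h2 : (1 / τ + ε) * Λ = ((1 + ε * τ) * Λ) / τ := by field_simp
  have h3 : (1 + (6 + 4 * S) * δ) * x0 = ((1 + (6 + 4 * S) * δ) * (τ * x0)) / τ := by field_simp
  rw [neg_mul, neg_mul, neg_le_neg_iff, h2, h3]
  gcongr
end

section
/- Let M be a k × p real matrix with k, p ≥ 1. Denote by e_1,…,e_k ∈ ℝ^p the rows of M and by C_1,…,C_p ∈ ℝ^k its columns. Then the rank over ℚ of the family C_1,…,C_p, in ℝ^k viewed as a vector space over ℚ, is equal to the dimension (over ℝ) of the smallest subspace of ℝ^p that is defined over ℚ and contains e_1,…,e_k. -/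
/-- A subspace of ℝ^p is defined over ℚ if it is spanned over ℝ by vectors with rational
coordinates. -/
def DefinedOverQ {p : ℕ} (F : Submodule ℝ (Fin p → ℝ)) : Prop :=
  ∃ s : Set (Fin p → ℝ), (∀ v ∈ s, ∀ i, ∃ q : ℚ, v i = (q : ℝ)) ∧ Submodule.span ℝ s = F

/-- For a k × p real matrix M with rows e_1,…,e_k and columns C_1,…,C_p, the rank over ℚ of
the family C_1,…,C_p in ℝ^k (viewed as a ℚ-vector space) equals the dimension of the smallest
subspace of ℝ^p defined over ℚ containing the rows e_1,…,e_k. -/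
theorem stmt11 (k p : ℕ) (hk : 1 ≤ k) (hp : 1 ≤ p) (M : Matrix (Fin k) (Fin p) ℝ) :
    Module.finrank ℚ
      (Submodule.span ℚ (Set.range (fun i : Fin p => fun j : Fin k => M j i))) =
    Module.finrank ℝ
      ↥(sInf {F : Submodule ℝ (Fin p → ℝ) | DefinedOverQ F ∧ ∀ j : Fin k, M j ∈ F}) := by
  classical
  set C : Fin p → Fin k → ℝ := fun i j => M j i with hC
  set W := Submodule.span ℚ (Set.range C) with hW
  have : FiniteDimensional ℚ W := FiniteDimensional.span_of_finite ℚ (Set.finite_range C)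
  let b := Module.finBasis ℚ W
  set r := Module.finrank ℚ W with hr
  have hCW : ∀ i, C i ∈ W := fun i => Submodule.subset_span ⟨i, rfl⟩
  let a : Fin r → Fin p → ℚ := fun l i => b.repr ⟨C i, hCW i⟩ l
  let A : Fin r → Fin p → ℝ := fun l i => (a l i : ℝ)
  have hM : ∀ j i, M j i = ∑ l, (a l i : ℝ) * (b l : Fin k → ℝ) j := by
    intro j i
    have h := congrArg (fun w : W => (w : Fin k → ℝ) j) (b.sum_repr ⟨C i, hCW i⟩)
    simp only [Submodule.coe_sum, Submodule.coe_smul, Finset.sum_apply, Pi.smul_apply,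
      Rat.smul_def] at h
    exact h.symm
  have hMA : ∀ j, M j = ∑ l, (b l : Fin k → ℝ) j • A l := by
    intro j
    ext i
    rw [hM j i, Finset.sum_apply]
    exact Finset.sum_congr rfl fun l _ => by simp [A, mul_comm]
  have hind : LinearIndependent ℝ A := by
    rw [Fintype.linearIndependent_iff]
    intro c hc m
    obtain ⟨d, hd⟩ := (Submodule.mem_span_range_iff_exists_fun ℚ).1 (b m).2
    have hd' : ∑ i, d i • (⟨C i, hCW i⟩ : W) = b m := by
      apply Subtype.ext
      simpa using hd
    have key : ∀ l, ∑ i, d i * a l i = if m = l then 1 else 0 := by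
      intro l
      have h := congrArg (fun w : W => b.repr w l) hd'
      simp only [map_sum, map_smul, Finsupp.coe_finsetSum, Finset.sum_apply, Finsupp.smul_apply,
        smul_eq_mul, b.repr_self, Finsupp.single_apply] at h
      exact h
    have h0 : ∑ i, (d i : ℝ) * ∑ l, c l * A l i = 0 := by
      apply Finset.sum_eq_zero
      intro i _
      have := congrFun hc i
      simp only [Finset.sum_apply, Pi.smul_apply, smul_eq_mul, Pi.zero_apply] at this
      rw [this, mul_zero]
    have h1 : ∑ i, (d i : ℝ) * ∑ l, c l * A l i = ∑ l, c l * ((∑ i, d i * a l i : ℚ) : ℝ) := by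
      simp only [Finset.mul_sum, Rat.cast_sum, Rat.cast_mul]
      rw [Finset.sum_comm]
      refine Finset.sum_congr rfl fun l _ => Finset.sum_congr rfl fun i _ => ?_
      simp only [A]; ring
    rw [h1] at h0
    simp only [key] at h0
    simpa [apply_ite (Rat.cast : ℚ → ℝ)] using h0
  have hS : sInf {F : Submodule ℝ (Fin p → ℝ) | DefinedOverQ F ∧ ∀ j : Fin k, M j ∈ F}
      = Submodule.span ℝ (Set.range A) := by
    apply le_antisymm
    · apply sInf_le
      refine ⟨⟨Set.range A, ?_, rfl⟩, ?_⟩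
      · rintro _ ⟨l, rfl⟩ i
        exact ⟨a l i, rfl⟩
      · intro j
        rw [hMA j]
        exact Submodule.sum_mem _ fun l _ =>
          Submodule.smul_mem _ _ (Submodule.subset_span ⟨l, rfl⟩)
    · apply le_sInf
      rintro F ⟨⟨s, hs, rfl⟩, hF⟩
      rw [Submodule.span_le]
      rintro _ ⟨l, rfl⟩
      let cst : (Fin p → ℚ) → (Fin p → ℝ) := fun v i => (v i : ℝ)
      let S : Submodule ℚ (Fin p → ℚ) := Submodule.span ℚ (cst ⁻¹' s)
      have hSF : ∀ v ∈ S, cst v ∈ Submodule.span ℝ s := by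
        intro v hv
        induction hv using Submodule.span_induction with
        | mem x hx => exact Submodule.subset_span hx
        | zero =>
          have : cst 0 = 0 := by ext i; simp [cst]
          rw [this]; exact Submodule.zero_mem _
        | add x y _ _ hx hy =>
          have : cst (x + y) = cst x + cst y := by ext i; simp [cst]
          rw [this]; exact Submodule.add_mem _ hx hy
        | smul q x _ hx =>
          have : cst (q • x) = (q : ℝ) • cst x := by ext i; simp [cst]
          rw [this]; exact Submodule.smul_mem _ _ hx
      have haS : a l ∈ S := by
        by_contra hn
        obtain ⟨φ, hφ, hφS⟩ := Submodule.exists_le_ker_of_notMem hn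
        let f : Fin p → ℚ := fun i => φ (Pi.single i 1)
        have hf : ∀ v, φ v = ∑ i, v i * f i := by
          intro v
          conv_lhs => rw [pi_eq_sum_univ' v]
          simp [f, map_sum]
        let ψ : (Fin p → ℝ) →ₗ[ℝ] ℝ := Fintype.linearCombination ℝ (fun i => (f i : ℝ))
        have hψ : ∀ v, ψ v = ∑ i, v i * (f i : ℝ) := fun v => by
          simp [ψ, Fintype.linearCombination_apply]
        have hψc : ∀ v, ψ (cst v) = (φ v : ℝ) := fun v => by
          rw [hψ, hf]; simp [cst]
        have hker : Submodule.span ℝ s ≤ LinearMap.ker ψ := by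
          rw [Submodule.span_le]
          intro v hv
          choose w hw using hs v hv
          have hvw : v = cst w := funext hw
          have : w ∈ S := Submodule.subset_span (by simpa [← hvw] using hv)
          have h2 : φ w = 0 := hφS this
          simp only [SetLike.mem_coe, LinearMap.mem_ker]
          rw [hvw, hψc, h2, Rat.cast_zero]
        have hsum : ∑ m, φ (a m) • b m = 0 := by
          apply Subtype.ext
          ext j
          have h3 : ψ (M j) = 0 := hker (hF j)
          rw [hMA j, map_sum] at h3
          simp only [Submodule.coe_sum, Submodule.coe_smul, Finset.sum_apply, Pi.smul_apply,
            Rat.smul_def, Submodule.coe_zero, Pi.zero_apply]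
          rw [← h3]
          refine Finset.sum_congr rfl fun m _ => ?_
          have : ψ (A m) = (φ (a m) : ℝ) := hψc (a m)
          rw [map_smul, this, smul_eq_mul, mul_comm]
        exact hφ (Fintype.linearIndependent_iff.1 b.linearIndependent _ hsum l)
      exact hSF _ haS
  rw [hS, finrank_span_eq_card hind, Fintype.card_fin]
end

section
/- Let a ≥ 3 be an odd integer and let ξ = (ξ_3, ξ_5, …, ξ_{a+2}) be real numbers indexed by the odd integers from 3 to a+2. Define n(ξ) = dim_ℚ Span_ℚ(1, ξ_3, ξ_5, …, ξ_a) and define N(ξ) as the rank over ℚ, in ℝ² viewed as a ℚ-vector space, of the family of vectors (1,0), (0,1), and (ξ_i, (i(i+1)/2)·ξ_{i+2}) for all odd i with 3 ≤ i ≤ a. Then n(ξ) + 1 ≤ N(ξ) ≤ 2·n(ξ) + 1. -/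
/-- n(ξ) = dim_ℚ Span_ℚ(1, ξ_3, ξ_5, …, ξ_a) (ξ indexed by odd integers). -/
noncomputable def nrank (a : ℕ) (ξ : ℕ → ℝ) : ℕ :=
  Module.finrank ℚ (Submodule.span ℚ
    (({1} : Set ℝ) ∪ {x : ℝ | ∃ i : ℕ, Odd i ∧ 3 ≤ i ∧ i ≤ a ∧ x = ξ i}))

/-- N(ξ) = rank over ℚ, in ℝ² viewed as a ℚ-vector space, of the family (1,0), (0,1), and
(ξ_i, (i(i+1)/2)·ξ_{i+2}) for odd 3 ≤ i ≤ a. -/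
noncomputable def Nrank (a : ℕ) (ξ : ℕ → ℝ) : ℕ :=
  Module.finrank ℚ (Submodule.span ℚ
    (({((1:ℝ), (0:ℝ)), ((0:ℝ), (1:ℝ))} : Set (ℝ × ℝ)) ∪
      {x : ℝ × ℝ | ∃ i : ℕ, Odd i ∧ 3 ≤ i ∧ i ≤ a ∧
        x = (ξ i, ((i : ℝ) * (i + 1) / 2) * ξ (i + 2))}))

/-- For odd a ≥ 3 and any real tuple ξ: n(ξ) + 1 ≤ N(ξ) ≤ 2n(ξ) + 1. -/
theorem stmt12 (a : ℕ) (ha : Odd a) (ha3 : 3 ≤ a) (ξ : ℕ → ℝ) :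
    nrank a ξ + 1 ≤ Nrank a ξ ∧ Nrank a ξ ≤ 2 * nrank a ξ + 1 := by
  unfold nrank Nrank
  set S : Set ℝ := ({1} : Set ℝ) ∪ {x : ℝ | ∃ i : ℕ, Odd i ∧ 3 ≤ i ∧ i ≤ a ∧ x = ξ i} with hS
  set T : Set (ℝ × ℝ) := ({((1:ℝ), (0:ℝ)), ((0:ℝ), (1:ℝ))} : Set (ℝ × ℝ)) ∪
      {x : ℝ × ℝ | ∃ i : ℕ, Odd i ∧ 3 ≤ i ∧ i ≤ a ∧
        x = (ξ i, ((i : ℝ) * (i + 1) / 2) * ξ (i + 2))} with hT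
  have hSf : S.Finite := by
    refine (Set.finite_singleton _).union (((Set.finite_Iic a).image ξ).subset ?_)
    rintro x ⟨i, -, -, hi, rfl⟩
    exact ⟨i, hi, rfl⟩
  have hTf : T.Finite := by
    refine (Set.toFinite _).union (((Set.finite_Iic a).image
      (fun i : ℕ => (ξ i, ((i : ℝ) * (i + 1) / 2) * ξ (i + 2)))).subset ?_)
    rintro x ⟨i, -, -, hi, rfl⟩
    exact ⟨i, hi, rfl⟩
  have one_mem : (1:ℝ) ∈ Submodule.span ℚ S := Submodule.subset_span (Or.inl rfl)
  have xi_mem : ∀ i, Odd i → 3 ≤ i → i ≤ a → ξ i ∈ Submodule.span ℚ S := fun i h1 h2 h3 =>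
    Submodule.subset_span (Or.inr ⟨i, h1, h2, h3, rfl⟩)
  have : FiniteDimensional ℚ (Submodule.span ℚ S) := FiniteDimensional.span_of_finite ℚ hSf
  have : FiniteDimensional ℚ (Submodule.span ℚ T) := FiniteDimensional.span_of_finite ℚ hTf
  constructor
  · set W := Submodule.span ℚ T with hW
    let f : W →ₗ[ℚ] ℝ := (LinearMap.fst ℚ ℝ ℝ).domRestrict W
    have h := LinearMap.finrank_range_add_finrank_ker f
    have h1 : Submodule.span ℚ S ≤ LinearMap.range f := by
      rw [Submodule.span_le]
      rintro x (hx | ⟨i, h1, h2, h3, rfl⟩)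
      · rw [Set.mem_singleton_iff] at hx
        subst hx
        exact ⟨⟨(1, 0), Submodule.subset_span (Or.inl (Or.inl rfl))⟩, rfl⟩
      · exact ⟨⟨_, Submodule.subset_span (Or.inr ⟨i, h1, h2, h3, rfl⟩)⟩, rfl⟩
    have h2 := Submodule.finrank_mono h1
    have h3 : 0 < Module.finrank ℚ (LinearMap.ker f) := by
      have : Nontrivial (LinearMap.ker f) := by
        refine ⟨⟨⟨⟨(0, 1), Submodule.subset_span (Or.inl (Or.inr rfl))⟩, ?_⟩, 0, ?_⟩⟩
        · rw [LinearMap.mem_ker]; rfl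
        · intro h
          have h' := congrArg (fun z : LinearMap.ker f => ((z : W) : ℝ × ℝ).2) h
          simp at h'
      exact Module.finrank_pos (R := ℚ) (M := LinearMap.ker f)
    omega
  · set V := Submodule.span ℚ S with hV
    let L := Submodule.span ℚ ({ξ (a+2)} : Set ℝ)
    have : FiniteDimensional ℚ L := FiniteDimensional.span_of_finite ℚ (Set.finite_singleton _)
    let U := V ⊔ L
    let g := V.subtype.prodMap U.subtype
    have h1 : Submodule.span ℚ T ≤ LinearMap.range g := by
      have key : ∀ x ∈ V, ∀ y ∈ U, (x, y) ∈ LinearMap.range g := fun x hx y hy =>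
        ⟨(⟨x, hx⟩, ⟨y, hy⟩), rfl⟩
      rw [Submodule.span_le]
      rintro x ((hx | hx) | ⟨i, h1, h2, h3, rfl⟩)
      · subst hx
        exact key _ one_mem _ (zero_mem _)
      · rw [Set.mem_singleton_iff] at hx
        subst hx
        exact key _ (zero_mem _) _ (Submodule.mem_sup_left one_mem)
      · refine key _ (xi_mem i h1 h2 h3) _ ?_
        have e : ((i : ℝ) * (i + 1) / 2) * ξ (i + 2)
            = ((i : ℚ) * (i + 1) / 2) • ξ (i + 2) := by
          rw [Rat.smul_def]; push_cast; rfl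
        rw [e]
        apply Submodule.smul_mem
        by_cases hia : i = a
        · subst hia
          exact Submodule.mem_sup_right (Submodule.mem_span_singleton_self _)
        · refine Submodule.mem_sup_left (xi_mem _ ?_ (by omega) ?_)
          · obtain ⟨k, rfl⟩ := h1
            exact ⟨k + 1, by ring⟩
          · obtain ⟨k, rfl⟩ := h1
            obtain ⟨l, rfl⟩ := ha
            omega
    have h2 := Submodule.finrank_mono h1
    have h3 := LinearMap.finrank_range_le g
    rw [Module.finrank_prod] at h3
    have h4 : Module.finrank ℚ U ≤ Module.finrank ℚ V + Module.finrank ℚ L :=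
      Submodule.finrank_add_le_finrank_add_finrank V L
    have h5 : Module.finrank ℚ L ≤ 1 := by
      have := finrank_span_le_card (R := ℚ) ({ξ (a+2)} : Set ℝ)
      simpa using this
    omega
end

section
/- Let a ≥ 3 be an odd integer. For real numbers ξ = (ξ_3, ξ_5, …, ξ_{a+2}) indexed by the odd integers from 3 to a+2, define n(ξ) = dim_ℚ Span_ℚ(1, ξ_3, ξ_5, …, ξ_a) and define N(ξ) as the rank over ℚ, in ℝ² viewed as a ℚ-vector space, of the family of vectors (1,0), (0,1), and (ξ_i, (i(i+1)/2)·ξ_{i+2}) for all odd i with 3 ≤ i ≤ a. Then for all positive integers n and N with N ≤ (a+3)/2 and n+1 ≤ N ≤ 2n+1, there exists such a tuple ξ of real numbers with n(ξ) = n and N(ξ) = N. -/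
lemma aux_finrank {ι M : Type*} [AddCommGroup M] [Module ℚ M] {v : ι → M}
    (hv : LinearIndependent ℚ v) (T : Finset ι) (S : Set M)
    (h1 : ∀ j ∈ T, v j ∈ S) (h2 : ∀ x ∈ S, x = 0 ∨ ∃ j ∈ T, x = v j) :
    Module.finrank ℚ (Submodule.span ℚ S) = T.card := by
  have hS : Submodule.span ℚ S = Submodule.span ℚ (Set.range (fun j : T => v j)) := by
    apply le_antisymm
    · rw [Submodule.span_le]
      intro x hx
      rcases h2 x hx with rfl | ⟨j, hj, rfl⟩
      · exact Submodule.zero_mem _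
      · exact Submodule.subset_span ⟨⟨j, hj⟩, rfl⟩
    · apply Submodule.span_mono
      rintro _ ⟨⟨j, hj⟩, rfl⟩
      exact h1 j hj
  have := finrank_span_eq_card (hv.comp (fun j : T => (j : ι)) Subtype.val_injective)
  rw [hS]
  simpa [Function.comp_def] using this

lemma aux_indep {f y g : ℕ → ℝ} (hf : LinearIndependent ℚ f) (hg : LinearIndependent ℚ g) :
    LinearIndependent ℚ (Sum.elim (fun j => ((f j, y j) : ℝ × ℝ)) (fun j => ((0, g j) : ℝ × ℝ))) := by
  have hfst : LinearIndependent ℚ (fun j => ((f j, y j) : ℝ × ℝ)) :=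
    LinearIndependent.of_comp (LinearMap.fst ℚ ℝ ℝ) hf
  have hsnd : LinearIndependent ℚ (fun j => ((0, g j) : ℝ × ℝ)) :=
    LinearIndependent.of_comp (LinearMap.snd ℚ ℝ ℝ) hg
  refine hfst.sum_type hsnd ?_
  rw [Submodule.disjoint_def]
  intro x hx hx'
  have h0 : x.1 = 0 := by
    have : Submodule.span ℚ (Set.range (fun j => ((0, g j) : ℝ × ℝ))) ≤
        LinearMap.ker (LinearMap.fst ℚ ℝ ℝ) := by
      rw [Submodule.span_le]
      rintro _ ⟨j, rfl⟩
      simp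
    simpa using this hx'
  rw [Finsupp.mem_span_range_iff_exists_finsupp] at hx
  obtain ⟨c, rfl⟩ := hx
  have : c = 0 := by
    rw [linearIndependent_iff] at hf
    apply hf
    rw [Finsupp.linearCombination_apply]
    have h := h0
    rw [Finsupp.sum, Prod.fst_sum] at h
    simpa [Finsupp.sum] using h
  simp [this]

lemma aux_basis : ∃ e : ℕ → ℝ, e 0 = 1 ∧ LinearIndependent ℚ e := by
  have ht : Transcendental ℚ (liouvilleNumber (2 : ℕ)) := by
    have := transcendental_liouvilleNumber (m := 2) le_rfl
    intro h
    exact this ((IsFractionRing.isAlgebraic_iff ℤ ℚ ℝ).2 h)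
  refine ⟨fun j => liouvilleNumber (2 : ℕ) ^ j, by simp, ?_⟩
  have hinj := transcendental_iff_injective.1 ht
  have := (Polynomial.basisMonomials ℚ).linearIndependent.map'
    (Polynomial.aeval (liouvilleNumber (2 : ℕ)) : Polynomial ℚ →ₐ[ℚ] ℝ).toLinearMap
    (LinearMap.ker_eq_bot.2 hinj)
  have key : (fun j : ℕ => liouvilleNumber (2 : ℕ) ^ j) =
      (Polynomial.aeval (liouvilleNumber (2 : ℕ)) : Polynomial ℚ →ₐ[ℚ] ℝ).toLinearMap ∘
        (Polynomial.basisMonomials ℚ) := by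
    funext j
    simp
  rw [key]
  exact this

lemma aux_main (m d s δ : ℕ) (hsd : s ≤ d) (hδ : δ = 0 ∨ (δ = 1 ∧ s = d))
    (hm : d + s + δ ≤ m) (hm1 : 1 ≤ m) :
    ∃ ξ : ℕ → ℝ, nrank (2 * m + 1) ξ = d + 1 ∧ Nrank (2 * m + 1) ξ = d + s + δ + 2 := by
  obtain ⟨e, he0, he⟩ := aux_basis
  obtain ⟨x, hx⟩ : ∃ x : ℕ → ℝ, x = fun k =>
    if k ≤ 2 * s then (if k % 2 = 0 then e (k / 2) else 0)
    else if k ≤ s + d then e (k - s) else if k = m + 1 ∧ δ = 1 then e (d + 1) else 0 := ⟨_, rfl⟩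
  obtain ⟨p, hp⟩ : ∃ p : ℕ → ℕ, p = fun j => if j ≤ s then 2 * j else s + j := ⟨_, rfl⟩
  obtain ⟨q, hq⟩ : ∃ q : ℕ → ℕ, q = fun j =>
    if j = 0 then 1 else if j ≤ s then 4 * j - 1 else 2 * m + 1 := ⟨_, rfl⟩
  obtain ⟨C, hC⟩ : ∃ C : ℕ → ℝ, C = fun i : ℕ => ((i : ℝ) * (i + 1) / 2) := ⟨_, rfl⟩
  -- values of x
  have xp : ∀ j, 1 ≤ j → j ≤ d → x (p j) = e j := by
    intro j h1 h2
    simp only [hx, hp]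
    by_cases h : j ≤ s
    · rw [if_pos h, if_pos (by omega), if_pos (by omega)]; congr 1; omega
    · rw [if_neg h, if_neg (by omega), if_pos (by omega)]; congr 1; omega
  have xodd : ∀ j, 1 ≤ j → j ≤ s → x (2 * j - 1) = 0 := by
    intro j h1 h2
    simp only [hx]
    rw [if_pos (by omega), if_neg (by omega)]
  have xbig : ∀ k, s + d < k → ¬ (k = m + 1 ∧ δ = 1) → x k = 0 := by
    intro k h1 h2
    simp only [hx]
    rw [if_neg (by omega), if_neg (by omega), if_neg h2]
  have xlast : δ = 1 → x (m + 1) = e (d + 1) := by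
    intro h1
    simp only [hx]
    rw [if_neg (by omega), if_neg (by omega), if_pos (by simp [h1])]
  have cases : ∀ k, 1 ≤ k → (∃ j, 1 ≤ j ∧ j ≤ s ∧ k = 2 * j - 1) ∨
      (∃ j, 1 ≤ j ∧ j ≤ d ∧ k = p j) ∨ s + d < k := by
    intro k h1
    by_cases h : k ≤ 2 * s
    · rcases Nat.even_or_odd' k with ⟨j, rfl | rfl⟩
      · right; left; exact ⟨j, by omega, by omega, by simp only [hp]; rw [if_pos (by omega)]⟩
      · left; exact ⟨j + 1, by omega, by omega, by omega⟩
    · by_cases h' : k ≤ s + d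
      · right; left
        exact ⟨k - s, by omega, by omega, by simp only [hp]; rw [if_neg (by omega)]; omega⟩
      · right; right; omega
  have ple : ∀ j, 1 ≤ j → j ≤ d → 1 ≤ p j ∧ p j ≤ m := by
    intro j h1 h2
    simp only [hp]
    split_ifs <;> omega
  have hx2 : ∀ k, (2 * k + 1 - 1) / 2 = k := by intro k; omega
  have hx3 : ∀ k, (2 * k + 1 + 2 - 1) / 2 = k + 1 := by intro k; omega
  refine ⟨fun i => x ((i - 1) / 2), ?_, ?_⟩
  · unfold nrank
    rw [aux_finrank he (Finset.range (d + 1))]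
    · simp
    · intro j hj
      rw [Finset.mem_range] at hj
      rcases Nat.eq_zero_or_pos j with rfl | h
      · left; simpa using he0
      · right
        obtain ⟨h3, h4⟩ := ple j h (by omega)
        refine ⟨2 * p j + 1, ⟨p j, rfl⟩, by omega, by omega, ?_⟩
        beta_reduce
        rw [hx2, xp j h (by omega)]
    · rintro _ (h | ⟨i, ⟨k, rfl⟩, h3, h4, rfl⟩)
      · right; exact ⟨0, by simp, by rw [he0]; exact h⟩
      · beta_reduce
        rw [hx2]
        rcases cases k (by omega) with ⟨j, h5, h6, rfl⟩ | ⟨j, h5, h6, rfl⟩ | h5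
        · left; exact xodd j h5 h6
        · right; exact ⟨j, by rw [Finset.mem_range]; omega, xp j h5 h6⟩
        · left; exact xbig k h5 (by omega)
  · unfold Nrank
    have hg : LinearIndependent ℚ (fun j => C (q j) * e j) := by
      have hq1 : ∀ j, ((q j : ℚ) * (q j + 1) / 2) ≠ 0 := by
        intro j
        have : 1 ≤ q j := by
          simp only [hq]; split_ifs <;> omega
        positivity
      have := he.units_smul (fun j => Units.mk0 _ (hq1 j))
      convert this using 1
      funext j
      simp [hC, Units.smul_def, Rat.smul_def]
    have hv := aux_indep (y := fun j => if j = 0 then 0 else C (2 * p j + 1) * x (p j + 1)) he hg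
    beta_reduce
    rw [aux_finrank hv ((Finset.range (d + 1)).disjSum (Finset.range (s + δ + 1)))]
    · simp [Finset.card_disjSum]; omega
    · rintro (j | j) hj
      · simp only [Finset.inl_mem_disjSum, Finset.mem_range] at hj
        rcases Nat.eq_zero_or_pos j with rfl | h
        · left; simp [he0]
        · right
          obtain ⟨h3, h4⟩ := ple j h (by omega)
          refine ⟨2 * p j + 1, ⟨p j, rfl⟩, by omega, by omega, ?_⟩
          simp only [Sum.elim_inl]
          rw [hx2, hx3, xp j h (by omega), if_neg (by omega), hC]
      · simp only [Finset.inr_mem_disjSum, Finset.mem_range] at hj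
        simp only [Sum.elim_inr]
        rcases Nat.eq_zero_or_pos j with rfl | h
        · left; right; simp [he0, hq, hC]
        · right
          by_cases hjs : j ≤ s
          · have hqj : q j = 2 * (2 * j - 1) + 1 := by
              simp only [hq]; rw [if_neg (by omega), if_pos hjs]; omega
            refine ⟨2 * (2 * j - 1) + 1, ⟨_, rfl⟩, by omega, by omega, ?_⟩
            have h5 : 2 * j - 1 + 1 = p j := by
              simp only [hp]; rw [if_pos hjs]; omega
            rw [hx2, hx3, xodd j h hjs, h5, xp j h (by omega), hqj, hC]
          · have hqj : q j = 2 * m + 1 := by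
              simp only [hq]; rw [if_neg (by omega), if_neg hjs]
            have hjd : j = d + 1 := by omega
            refine ⟨2 * m + 1, ⟨_, rfl⟩, by omega, by omega, ?_⟩
            rw [hx2, hx3, xbig m (by omega) (by omega), xlast (by omega), hqj, hjd, hC]
    · rintro _ ((h | h) | ⟨i, ⟨k, rfl⟩, h3, h4, rfl⟩)
      · right; exact ⟨Sum.inl 0, by simp, by rw [h]; simp [he0]⟩
      · right; exact ⟨Sum.inr 0, by simp, by rw [h]; simp [he0, hq, hC]⟩
      · rw [hx2, hx3]
        rcases cases k (by omega) with ⟨j, h5, h6, rfl⟩ | ⟨j, h5, h6, rfl⟩ | h5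
        · right
          refine ⟨Sum.inr j, by simp; omega, ?_⟩
          have hqj : q j = 2 * (2 * j - 1) + 1 := by
            simp only [hq]; rw [if_neg (by omega), if_pos h6]; omega
          have h7 : 2 * j - 1 + 1 = p j := by
            simp only [hp]; rw [if_pos h6]; omega
          simp only [Sum.elim_inr]
          rw [xodd j h5 h6, h7, xp j h5 (by omega), hqj, hC]
        · right
          refine ⟨Sum.inl j, by simp; omega, ?_⟩
          simp only [Sum.elim_inl]
          rw [xp j h5 h6, if_neg (by omega), hC]
        · by_cases hl : k + 1 = m + 1 ∧ δ = 1
          · right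
            obtain ⟨hl1, hl2⟩ := hl
            obtain rfl : k = m := by omega
            refine ⟨Sum.inr (d + 1), by simp; omega, ?_⟩
            have hqj : q (d + 1) = 2 * k + 1 := by
              simp only [hq]; rw [if_neg (by omega), if_neg (by omega)]
            simp only [Sum.elim_inr]
            rw [xlast hl2, xbig k h5 (by omega), hqj, hC]
          · left
            rw [xbig k h5 (by omega), xbig (k + 1) (by omega) hl]
            simp

/-- For odd a ≥ 3 and all positive integers n, N with N ≤ (a+3)/2 and n+1 ≤ N ≤ 2n+1, there
is a tuple ξ with n(ξ) = n and N(ξ) = N. -/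
theorem stmt13 (a : ℕ) (ha : Odd a) (ha3 : 3 ≤ a) (n N : ℕ) (hn : 1 ≤ n) (hN : 1 ≤ N)
    (hNa : 2 * N ≤ a + 3) (h1 : n + 1 ≤ N) (h2 : N ≤ 2 * n + 1) :
    ∃ ξ : ℕ → ℝ, nrank a ξ = n ∧ Nrank a ξ = N := by
  obtain ⟨m, rfl⟩ := ha
  by_cases h : N ≤ 2 * n
  · obtain ⟨ξ, h3, h4⟩ := aux_main m (n - 1) (N - 2 - (n - 1)) 0 (by omega) (by omega)
      (by omega) (by omega)
    exact ⟨ξ, by omega, by omega⟩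
  · obtain ⟨ξ, h3, h4⟩ := aux_main m (n - 1) (n - 1) 1 (by omega) (by omega)
      (by omega) (by omega)
    exact ⟨ξ, by omega, by omega⟩
end

section
/- Assume hypotheses (S). Then every subspace F of ℝ^p that is defined over ℚ and contains e_1,…,e_k satisfies dim_ℝ F ≥ k + τ_1 + … + τ_k. -/
open Matrix in
lemma aux_det_bound {p : ℕ} {ι : Type*} [Fintype ι] [DecidableEq ι]
    (N : Matrix (Fin p) ι ℝ) (b : ι → ℝ) (hb : ∀ t i, |N t i| ≤ b i) (hb0 : ∀ i, 0 ≤ b i) :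
    |(Nᵀ * N).det| ≤ (Fintype.card ι).factorial * ((p : ℝ) ^ (Fintype.card ι) * (∏ i, b i) ^ 2) := by
  rw [Matrix.det_apply]
  refine (Finset.abs_sum_le_sum_abs _ _).trans ?_
  have h1 : ∀ i j, |(Nᵀ * N) i j| ≤ p * (b i * b j) := by
    intro i j
    rw [Matrix.mul_apply]
    refine (Finset.abs_sum_le_sum_abs _ _).trans ?_
    calc ∑ t, |Nᵀ i t * N t j| ≤ ∑ t : Fin p, b i * b j := by
          refine Finset.sum_le_sum fun t _ => ?_
          rw [abs_mul, Matrix.transpose_apply]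
          exact mul_le_mul (hb t i) (hb t j) (abs_nonneg _) (hb0 i)
      _ = _ := by simp
  calc ∑ σ : Equiv.Perm ι, |Equiv.Perm.sign σ • ∏ i, (Nᵀ * N) (σ i) i|
      ≤ ∑ σ : Equiv.Perm ι, ((p : ℝ) ^ (Fintype.card ι) * (∏ i, b i) ^ 2) := by
        refine Finset.sum_le_sum fun σ _ => ?_
        have h2 : |Equiv.Perm.sign σ • ∏ i, (Nᵀ * N) (σ i) i| = |∏ i, (Nᵀ * N) (σ i) i| := by
          rcases Int.units_eq_one_or (Equiv.Perm.sign σ) with h | h <;> simp [h]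
        rw [h2, Finset.abs_prod]
        calc ∏ i, |(Nᵀ * N) (σ i) i| ≤ ∏ i, ((p : ℝ) * (b (σ i) * b i)) :=
              Finset.prod_le_prod (fun _ _ => abs_nonneg _) (fun i _ => h1 _ _)
          _ = _ := by
            rw [Finset.prod_mul_distrib, Finset.prod_mul_distrib, Equiv.prod_comp σ b]
            simp [sq]
    _ = _ := by simp [Fintype.card_perm]

open Matrix in
lemma aux_int_det {p : ℕ} {ι : Type*} [Fintype ι] [DecidableEq ι]
    (M : Matrix (Fin p) ι ℤ) (hM : Function.Injective (M.map (Int.cast : ℤ → ℝ)).mulVec) :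
    1 ≤ |((M.map (Int.cast : ℤ → ℝ))ᵀ * (M.map (Int.cast : ℤ → ℝ))).det| := by
  have h1 : ((M.map (Int.cast : ℤ → ℝ))ᵀ * (M.map (Int.cast : ℤ → ℝ))).det
      = (((Mᵀ * M).det : ℤ) : ℝ) := by
    have := RingHom.map_det (Int.castRingHom ℝ) (Mᵀ * M)
    simp only [eq_intCast] at this
    rw [this]
    congr 1
    ext i j
    simp [Matrix.mul_apply]
  have h2 : ((M.map (Int.cast : ℤ → ℝ))ᵀ * (M.map (Int.cast : ℤ → ℝ))).det ≠ 0 := by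
    intro h0
    obtain ⟨v, hv, hv0⟩ := Matrix.exists_mulVec_eq_zero_iff.mpr h0
    apply hv
    apply hM
    rw [Matrix.mulVec_zero]
    have h3 : (M.map (Int.cast : ℤ → ℝ) *ᵥ v) ⬝ᵥ (M.map (Int.cast : ℤ → ℝ) *ᵥ v) = 0 := by
      rw [Matrix.dotProduct_mulVec, ← Matrix.mulVec_transpose, Matrix.mulVec_mulVec, hv0,
        zero_dotProduct]
    exact dotProduct_self_eq_zero.mp h3
  rw [h1] at h2 ⊢
  have h4 : (Mᵀ * M).det ≠ 0 := by exact_mod_cast h2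
  exact_mod_cast Int.one_le_abs h4

lemma aux_basis_s14 {p : ℕ} (F : Submodule ℝ (EuclideanSpace ℝ (Fin p)))
    (hF : ∃ s : Set (EuclideanSpace ℝ (Fin p)),
        (∀ v ∈ s, ∀ i, ∃ q : ℚ, v i = (q : ℝ)) ∧ Submodule.span ℝ s = F) :
    ∃ (f : Module.Basis (Fin (Module.finrank ℝ F)) ℝ F) (z : Fin p → Fin (Module.finrank ℝ F) → ℤ),
      ∀ i x, (f i : EuclideanSpace ℝ (Fin p)) x = z x i := by
  obtain ⟨s, hs, hsF⟩ := hF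
  let S : Set F := {v | ∀ x, ∃ z : ℤ, (v : EuclideanSpace ℝ (Fin p)) x = z}
  have hS : ⊤ ≤ Submodule.span ℝ S := by
    have h1 : F ≤ (Submodule.span ℝ S).map F.subtype := by
      conv_lhs => rw [← hsF]
      rw [Submodule.span_le]
      intro v hv
      choose q hq using hs v hv
      let D : ℕ := ∏ x, (q x).den
      have hD : (D : ℝ) ≠ 0 := by
        have : D ≠ 0 := Finset.prod_ne_zero_iff.mpr fun x _ => (q x).den_nz
        exact_mod_cast this
      have hvF : v ∈ F := hsF ▸ Submodule.subset_span hv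
      refine ⟨⟨v, hvF⟩, ?_, rfl⟩
      have h2 : (D : ℝ) • (⟨v, hvF⟩ : F) ∈ Submodule.span ℝ S := by
        apply Submodule.subset_span
        intro x
        obtain ⟨c, hc⟩ : (q x).den ∣ D := Finset.dvd_prod_of_mem _ (Finset.mem_univ x)
        refine ⟨c * (q x).num, ?_⟩
        have h3 : ((q x).den : ℝ) * (q x : ℝ) = (q x).num := by
          exact_mod_cast Rat.den_mul_eq_num (q x)
        simp only [Submodule.coe_smul, PiLp.smul_apply, smul_eq_mul, hq, hc]
        push_cast
        rw [← h3]; ring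
      have h4 := Submodule.smul_mem _ ((D : ℝ)⁻¹) h2
      rwa [smul_smul, inv_mul_cancel₀ hD, one_smul] at h4
    intro v _
    obtain ⟨w, hw, hwv⟩ := h1 v.2
    have : w = v := Subtype.ext hwv
    exact this ▸ hw
  let f0 := Module.Basis.ofSpan hS
  have hf0 : ∀ i, f0 i ∈ S := fun i => Module.Basis.ofSpan_subset hS ⟨i, rfl⟩
  haveI : Fintype _ := FiniteDimensional.fintypeBasisIndex f0
  let f := f0.reindex (Fintype.equivFinOfCardEq (Module.finrank_eq_card_basis f0).symm)
  have hf : ∀ i, f i ∈ S := by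
    intro i
    simp only [f, Module.Basis.reindex_apply]
    exact hf0 _
  choose z hz using hf
  exact ⟨f, fun x i => z i x, fun i x => hz i x⟩

lemma aux_asym (A c K : ℝ) (hc : 0 < c) (Q : ℕ → ℕ) (hQmono : StrictMono Q) (δ : ℕ → ℝ)
    (hδ : Filter.Tendsto δ Filter.atTop (nhds 0))
    (h : ∀ n, 1 ≤ n → c ≤ K * (((Q n : ℝ)) ^ (A + δ n)) ^ 2) : 0 ≤ A := by
  by_contra! hA
  have hQt : Filter.Tendsto (fun n => (Q n : ℝ)) Filter.atTop Filter.atTop :=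
    tendsto_natCast_atTop_atTop.comp hQmono.tendsto_atTop
  have h1 : Filter.Tendsto (fun n => (Q n : ℝ) ^ (A / 2)) Filter.atTop (nhds 0) := by
    have := (tendsto_rpow_neg_atTop (y := -(A / 2)) (by linarith)).comp hQt
    simpa [Function.comp_def] using this
  have h2 : Filter.Tendsto (fun n => |K| * ((Q n : ℝ) ^ (A / 2)) ^ 2) Filter.atTop (nhds 0) := by
    simpa using (h1.pow 2).const_mul |K|
  have h3 := h2.eventually (gt_mem_nhds hc)
  have h4 := hδ.eventually (gt_mem_nhds (show (0 : ℝ) < -(A / 2) by linarith))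
  have h5 := hQt.eventually (Filter.eventually_ge_atTop 1)
  obtain ⟨n, h3, h4, h5, h6⟩ := (h3.and (h4.and (h5.and (Filter.eventually_ge_atTop 1)))).exists
  have h7 := h n h6
  have h8 : (Q n : ℝ) ^ (A + δ n) ≤ (Q n : ℝ) ^ (A / 2) :=
    Real.rpow_le_rpow_of_exponent_le h5 (by linarith)
  have h9 : K * (((Q n : ℝ)) ^ (A + δ n)) ^ 2 ≤ |K| * ((Q n : ℝ) ^ (A / 2)) ^ 2 := by
    have h0 : (0:ℝ) ≤ (Q n : ℝ) ^ (A + δ n) := by positivity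
    gcongr
    exact le_abs_self K
  linarith

/-- Siegel-type criterion: under hypotheses (S), every subspace F of ℝ^p defined over ℚ
containing e_1,…,e_k satisfies dim F ≥ k + τ_1 + … + τ_k. -/
theorem stmt14
    (k p : ℕ) (hk : 1 ≤ k) (hkp : k ≤ p - 1)
    (e : Fin k → EuclideanSpace ℝ (Fin p)) (he : LinearIndependent ℝ e)
    (τs : Fin k → ℝ) (hτpos : ∀ j, 0 < τs j)
    (Q : ℕ → ℕ) (hQmono : StrictMono Q) (hQpos : ∀ n, 0 < Q n)
    (l : ℕ → Fin p → Fin p → ℤ)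
    (hind : ∀ n : ℕ, 1 ≤ n →
      LinearIndependent ℝ (fun t : Fin p => fun i : Fin p => (l n t i : ℝ)))
    (εs θs : ℕ → ℝ)
    (hεs : Filter.Tendsto εs Filter.atTop (nhds 0))
    (hθs : Filter.Tendsto θs Filter.atTop (nhds 0))
    (hL : ∀ n : ℕ, 1 ≤ n → ∀ t : Fin p, ∀ j : Fin k,
      |∑ i, (l n t i : ℝ) * e j i| ≤ (Q n : ℝ) ^ (-τs j + εs n))
    (hl : ∀ n : ℕ, 1 ≤ n → ∀ t i, |(l n t i : ℝ)| ≤ (Q n : ℝ) ^ (1 + θs n))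
    :
    ∀ F : Submodule ℝ (EuclideanSpace ℝ (Fin p)),
      (∃ s : Set (EuclideanSpace ℝ (Fin p)),
        (∀ v ∈ s, ∀ i, ∃ q : ℚ, v i = (q : ℝ)) ∧ Submodule.span ℝ s = F) →
      (∀ j, e j ∈ F) →
      (k : ℝ) + ∑ j, τs j ≤ (Module.finrank ℝ F : ℝ) := by
  intro F hF heF
  obtain ⟨f0, z0, hz0⟩ := aux_basis_s14 F hF
  let e' : Fin k → F := fun j => ⟨e j, heF j⟩
  have he' : LinearIndependent ℝ e' := by
    apply LinearIndependent.of_comp F.subtype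
    exact he
  let G0 := Module.Basis.sumExtend he'
  haveI hfin : Fintype (Fin k ⊕ Module.Basis.sumExtendIndex he') :=
    FiniteDimensional.fintypeBasisIndex G0
  haveI : Finite (Module.Basis.sumExtendIndex he') :=
    Finite.of_injective (Sum.inr : _ → Fin k ⊕ Module.Basis.sumExtendIndex he') Sum.inr_injective
  obtain ⟨m, ⟨em⟩⟩ := Finite.exists_equiv_fin (Module.Basis.sumExtendIndex he')
  let G : Module.Basis (Fin k ⊕ Fin m) ℝ F := G0.reindex (Equiv.sumCongr (Equiv.refl _) em)
  have hGe : ∀ j, (G (Sum.inl j) : EuclideanSpace ℝ (Fin p)) = e j := by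
    intro j
    simp [G, G0, Module.Basis.sumExtend, e']
    rfl
  have hd : Module.finrank ℝ F = k + m := by
    rw [Module.finrank_eq_card_basis G]; simp
  let f : Module.Basis (Fin k ⊕ Fin m) ℝ F := f0.reindex (f0.indexEquiv G)
  let z : Matrix (Fin p) (Fin k ⊕ Fin m) ℤ := fun x i => z0 x ((f0.indexEquiv G).symm i)
  have hz : ∀ i x, (f i : EuclideanSpace ℝ (Fin p)) x = z x i := by
    intro i x
    simp [f, z, hz0]
  let P : Matrix (Fin k ⊕ Fin m) (Fin k ⊕ Fin m) ℝ := f.toMatrix G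
  have hP : P.det ≠ 0 := by
    have h1 : f.toMatrix G * G.toMatrix f = 1 := f.toMatrix_mul_toMatrix_flip G
    have h2 := congrArg Matrix.det h1
    rw [Matrix.det_mul, Matrix.det_one] at h2
    exact left_ne_zero_of_mul_eq_one h2
  let Gm : Matrix (Fin p) (Fin k ⊕ Fin m) ℝ := fun x i => (G i : EuclideanSpace ℝ (Fin p)) x
  let Fm : Matrix (Fin p) (Fin k ⊕ Fin m) ℝ := z.map (Int.cast : ℤ → ℝ)
  have hFG : Gm = Fm * P := by
    ext x i
    have h1 := congrArg (fun v : F => (v : EuclideanSpace ℝ (Fin p)) x) (f.sum_toMatrix_smul_self G i)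
    simp only [Submodule.coe_sum, Submodule.coe_smul, WithLp.ofLp_sum, Finset.sum_apply,
      PiLp.smul_apply, smul_eq_mul, WithLp.ofLp_smul, Pi.smul_apply, hz] at h1
    rw [Matrix.mul_apply]
    simp only [Gm, Fm, P, Matrix.map_apply]
    rw [← h1]
    exact Finset.sum_congr rfl fun _ _ => mul_comm _ _
  have hFinj : Function.Injective Fm.mulVec := by
    rw [Matrix.mulVec_injective_iff]
    have h1 : LinearIndependent ℝ (fun i => (f i : EuclideanSpace ℝ (Fin p))) :=
      f.linearIndependent.map' F.subtype (Submodule.ker_subtype F)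
    have h2 := h1.map' (WithLp.linearEquiv 2 ℝ (Fin p → ℝ)).toLinearMap (LinearEquiv.ker _)
    have h3 : Fm.col = (WithLp.linearEquiv 2 ℝ (Fin p → ℝ)).toLinearMap ∘
        (fun i => (f i : EuclideanSpace ℝ (Fin p))) := by
      ext i x
      simp [Fm, hz]
    rw [h3]
    exact h2
  let C : Fin k ⊕ Fin m → ℝ := Sum.elim (fun _ => 1)
    (fun i => ∑ x, |(G (Sum.inr i) : EuclideanSpace ℝ (Fin p)) x|)
  let a : Fin k ⊕ Fin m → ℝ := Sum.elim (fun j => - τs j) (fun _ => 1)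
  let δ : ℕ → Fin k ⊕ Fin m → ℝ := fun n => Sum.elim (fun _ => εs n) (fun _ => θs n)
  have hC0 : ∀ i, 0 ≤ C i := by
    rintro (j | i)
    · simp [C]
    · simp only [C, Sum.elim_inr]; positivity
  have hδ : Filter.Tendsto (fun n => ∑ i, δ n i) Filter.atTop (nhds 0) := by
    have : Filter.Tendsto (fun n => ∑ i, δ n i) Filter.atTop
        (nhds (∑ i : Fin k ⊕ Fin m, (0 : ℝ))) := by
      apply tendsto_finsetSum
      rintro (j | i) _
      · exact hεs
      · exact hθs
    simpa using this
  let d := Fintype.card (Fin k ⊕ Fin m)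
  have key := aux_asym (∑ i, a i) (P.det ^ 2)
    ((d.factorial : ℝ) * ((p : ℝ) ^ d * (∏ i, C i) ^ 2)) (by positivity) Q hQmono
    (fun n => ∑ i, δ n i) hδ (by
      intro n hn
      let Lz : Matrix (Fin p) (Fin p) ℤ := l n
      let Lm : Matrix (Fin p) (Fin p) ℝ := Lz.map (Int.cast : ℤ → ℝ)
      have hLinj : Function.Injective Lm.mulVec := by
        rw [Matrix.mulVec_injective_iff_isUnit, ← Matrix.linearIndependent_rows_iff_isUnit]
        exact hind n hn
      have hM : (Lz * z).map (Int.cast : ℤ → ℝ) = Lm * Fm := by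
        ext t i
        simp [Lm, Fm, Matrix.mul_apply]
      have h1 := aux_int_det (Lz * z) (by
        rw [hM]
        intro v w hvw
        simp only [← Matrix.mulVec_mulVec] at hvw
        exact hFinj (hLinj hvw))
      rw [hM] at h1
      have h2 : ((Lm * Gm).transpose * (Lm * Gm)).det
          = P.det ^ 2 * ((Lm * Fm).transpose * (Lm * Fm)).det := by
        rw [hFG, ← Matrix.mul_assoc Lm Fm P, Matrix.transpose_mul (Lm * Fm) P, Matrix.mul_assoc,
          ← Matrix.mul_assoc _ _ P, Matrix.det_mul, Matrix.det_mul, Matrix.det_transpose]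
        ring
      have hQ0 : (0 : ℝ) < Q n := by exact_mod_cast hQpos n
      have h3 := aux_det_bound (Lm * Gm) (fun i => C i * (Q n : ℝ) ^ (a i + δ n i)) (by
        rintro t (j | i)
        · have := hL n hn t j
          rw [Matrix.mul_apply]
          simp only [Gm, hGe, C, a, δ, Sum.elim_inl, one_mul]
          exact this
        · rw [Matrix.mul_apply]
          simp only [Lm, Lz, Gm, C, a, δ, Sum.elim_inr, Matrix.map_apply]
          refine (Finset.abs_sum_le_sum_abs _ _).trans ?_
          rw [Finset.sum_mul]
          refine Finset.sum_le_sum fun x _ => ?_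
          rw [abs_mul, mul_comm]
          exact mul_le_mul_of_nonneg_left (hl n hn t x) (abs_nonneg _))
        (fun i => mul_nonneg (hC0 i) (by positivity))
      rw [h2, abs_mul, abs_of_nonneg (sq_nonneg _), Finset.prod_mul_distrib,
        ← Real.rpow_sum_of_pos hQ0, Finset.sum_add_distrib] at h3
      calc P.det ^ 2 ≤ P.det ^ 2 * |((Lm * Fm).transpose * (Lm * Fm)).det| :=
            le_mul_of_one_le_right (sq_nonneg _) h1
        _ ≤ _ := h3
        _ = _ := by ring)
  rw [hd]
  have : ∑ i, a i = (m : ℝ) - ∑ j, τs j := by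
    simp [a, Fintype.sum_sum_type]; ring
  push_cast
  linarith
end

section
/- Assume hypotheses (S). Then for every ε > 0 there exists n_0 such that for every n ≥ n_0 the following holds: if a point of ℤ^p can be written as λ_1e_1 + … + λ_ke_k + u with real numbers λ_1,…,λ_k satisfying |λ_j| ≤ Q_n^{τ_j−ε} for every j ∈ {1,…,k}, and with u orthogonal to the ℝ-span of e_1,…,e_k and ‖u‖ ≤ Q_n^{−1−ε}, then this point is the zero vector. -/
/-- Siegel-type criterion, quantitative part: under hypotheses (S), for every ε > 0 and all
sufficiently large n, the only integer point λ_1e_1+…+λ_ke_k+u with |λ_j| ≤ Q_n^{τ_j-ε} and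
u ⟂ Span(e), ‖u‖ ≤ Q_n^{-1-ε}, is the zero vector. -/
theorem stmt15
    (k p : ℕ) (hk : 1 ≤ k) (hkp : k ≤ p - 1)
    (e : Fin k → EuclideanSpace ℝ (Fin p)) (he : LinearIndependent ℝ e)
    (τs : Fin k → ℝ) (hτpos : ∀ j, 0 < τs j)
    (Q : ℕ → ℕ) (hQmono : StrictMono Q) (hQpos : ∀ n, 0 < Q n)
    (l : ℕ → Fin p → Fin p → ℤ)
    (hind : ∀ n : ℕ, 1 ≤ n →
      LinearIndependent ℝ (fun t : Fin p => fun i : Fin p => (l n t i : ℝ)))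
    (εs θs : ℕ → ℝ)
    (hεs : Filter.Tendsto εs Filter.atTop (nhds 0))
    (hθs : Filter.Tendsto θs Filter.atTop (nhds 0))
    (hL : ∀ n : ℕ, 1 ≤ n → ∀ t : Fin p, ∀ j : Fin k,
      |∑ i, (l n t i : ℝ) * e j i| ≤ (Q n : ℝ) ^ (-τs j + εs n))
    (hl : ∀ n : ℕ, 1 ≤ n → ∀ t i, |(l n t i : ℝ)| ≤ (Q n : ℝ) ^ (1 + θs n))
    :
    ∀ ε : ℝ, 0 < ε → ∃ n0 : ℕ, ∀ n : ℕ, n0 ≤ n →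
      ∀ (lam : Fin k → ℝ) (u : EuclideanSpace ℝ (Fin p)),
        (∀ j, |lam j| ≤ (Q n : ℝ) ^ (τs j - ε)) →
        u ∈ (Submodule.span ℝ (Set.range e))ᗮ →
        ‖u‖ ≤ (Q n : ℝ) ^ (-1 - ε) →
        (∀ i, ∃ m : ℤ, (∑ j, lam j • e j + u) i = (m : ℝ)) →
        ∑ j, lam j • e j + u = 0 := by
  intro ε hε
  have hQ : Filter.Tendsto (fun n => (Q n : ℝ)) Filter.atTop Filter.atTop :=
    tendsto_natCast_atTop_atTop.comp hQmono.tendsto_atTop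
  have h1 : Filter.Tendsto (fun n => ((k : ℝ) + p) * (Q n : ℝ) ^ (-(ε / 2)))
      Filter.atTop (nhds 0) := by
    have := ((tendsto_rpow_neg_atTop (half_pos hε)).comp hQ).const_mul ((k : ℝ) + p)
    simpa using this
  have ev := (h1.eventually (gt_mem_nhds one_pos)).and
    ((hεs.eventually (gt_mem_nhds (half_pos hε))).and
    ((hθs.eventually (gt_mem_nhds (half_pos hε))).and (Filter.eventually_ge_atTop 1)))
  obtain ⟨n0, hn0⟩ := Filter.eventually_atTop.1 ev
  refine ⟨n0, fun n hn lam u hlam _ hun hint => ?_⟩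
  obtain ⟨hsmall, hε1, hθ1, hn1⟩ := hn0 n hn
  have hq1 : (1 : ℝ) ≤ Q n := by exact_mod_cast hQpos n
  have hq0 : (0 : ℝ) < Q n := by linarith
  choose m hm using hint
  set P : EuclideanSpace ℝ (Fin p) := ∑ j, lam j • e j + u with hP
  have hPi : ∀ i, P i = ∑ j, lam j * e j i + u i := by
    intro i
    simp [hP]
  have hzero : ∀ t, ∑ i, (l n t i : ℝ) * P i = 0 := by
    intro t
    have hdec : ∑ i, (l n t i : ℝ) * P i
        = ∑ j, lam j * (∑ i, (l n t i : ℝ) * e j i) + ∑ i, (l n t i : ℝ) * u i := by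
      simp only [hPi, mul_add, Finset.sum_add_distrib, Finset.mul_sum]
      rw [Finset.sum_comm]
      congr 1
      refine Finset.sum_congr rfl fun j _ => Finset.sum_congr rfl fun i _ => by ring
    have hA : |∑ j, lam j * (∑ i, (l n t i : ℝ) * e j i)| ≤ k * (Q n : ℝ) ^ (-(ε / 2)) := by
      refine (Finset.abs_sum_le_sum_abs _ _).trans ?_
      refine (Finset.sum_le_card_nsmul _ _ ((Q n : ℝ) ^ (-(ε / 2))) fun j _ => ?_).trans ?_
      · rw [abs_mul]
        refine (mul_le_mul (hlam j) (hL n hn1 t j) (abs_nonneg _) (by positivity)).trans ?_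
        rw [← Real.rpow_add hq0]
        exact Real.rpow_le_rpow_of_exponent_le hq1 (by linarith)
      · simp
    have hB : |∑ i, (l n t i : ℝ) * u i| ≤ p * (Q n : ℝ) ^ (-(ε / 2)) := by
      refine (Finset.abs_sum_le_sum_abs _ _).trans ?_
      refine (Finset.sum_le_card_nsmul _ _ ((Q n : ℝ) ^ (-(ε / 2))) fun i _ => ?_).trans ?_
      · rw [abs_mul]
        have hui : |u i| ≤ (Q n : ℝ) ^ (-1 - ε) :=
          le_trans (by simpa using PiLp.norm_apply_le u i) hun
        refine (mul_le_mul (hl n hn1 t i) hui (abs_nonneg _) (by positivity)).trans ?_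
        rw [← Real.rpow_add hq0]
        exact Real.rpow_le_rpow_of_exponent_le hq1 (by linarith)
      · simp
    have hlt : |∑ i, (l n t i : ℝ) * P i| < 1 := by
      rw [hdec]
      refine (abs_add_le _ _).trans_lt ?_
      linarith
    have hcast : ∑ i, (l n t i : ℝ) * P i = ((∑ i, l n t i * m i : ℤ) : ℝ) := by
      push_cast
      exact Finset.sum_congr rfl fun i _ => by rw [hm i]
    rw [hcast] at hlt ⊢
    have h2 : |∑ i, l n t i * m i| < 1 := by exact_mod_cast hlt
    rw [Int.abs_lt_one_iff.1 h2]
    simp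
  have hU : IsUnit (Matrix.of fun t i : Fin p => (l n t i : ℝ)) :=
    Matrix.linearIndependent_rows_iff_isUnit.1 (hind n hn1)
  have hinj := Matrix.mulVec_injective_of_isUnit hU
  have hv : (fun i => P i) = 0 := by
    apply hinj
    ext t
    simpa [Matrix.mulVec, dotProduct] using hzero t
  ext i
  exact congrFun hv i
end

section
/- Assume hypotheses (P). Then for all real numbers λ_1,…,λ_k, setting M = λ_1e_1 + … + λ_ke_k, for every n ≥ n_0 and every j ∈ {1,…,k} one has |λ_j| ≤ (1 + 1/k + 1/k²) · Σ_{i=1}^{k} |L_{φ^{i−1}(n)}(M)| / |L_{φ^{i−1}(n)}(e_j)|, where φ^{i−1} denotes the (i−1)-fold iterate of φ. -/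
theorem aux_inv_s16 {k : ℕ} (σ : Equiv.Perm (Fin k)) (h : σ ≠ 1) :
    ∃ a b, a < b ∧ σ b < σ a := by
  by_contra hc
  push Not at hc
  apply h
  have hs : StrictMono σ := fun a b hab =>
    lt_of_le_of_ne (hc a b hab) (fun h' => hab.ne (σ.injective h'))
  have := (StrictMono.range_inj hs strictMono_id).1 (by simp)
  ext x
  simp [this]

theorem aux_swap {k : ℕ} (B : Fin k → Fin k → ℝ) (hB : ∀ i j, 0 < B i j) (c : ℝ)
    (hm : ∀ i i' j j', i < i' → j < j' → B i' j * B i j' ≤ c * (B i' j' * B i j))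
    (σ : Equiv.Perm (Fin k)) (a b : Fin k) (hab : a < b) (hσ : σ b < σ a) :
    ∏ x, B (σ x) x ≤ c * ∏ x, B ((σ * Equiv.swap a b) x) x := by
  have key : ∀ f : Fin k → ℝ, ∏ x, f x = f a * f b * ∏ x ∈ (Finset.univ.erase a).erase b, f x := by
    intro f
    rw [mul_assoc, Finset.mul_prod_erase _ _ (by simp [hab.ne']), Finset.mul_prod_erase _ _ (by simp)]
  rw [key, key]
  have e1 : ∏ x ∈ (Finset.univ.erase a).erase b, B ((σ * Equiv.swap a b) x) x
      = ∏ x ∈ (Finset.univ.erase a).erase b, B (σ x) x := by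
    apply Finset.prod_congr rfl
    intro x hx
    simp at hx
    rw [Equiv.Perm.mul_apply, Equiv.swap_apply_of_ne_of_ne hx.2 hx.1]
  rw [e1]
  simp only [Equiv.Perm.mul_apply, Equiv.swap_apply_left, Equiv.swap_apply_right]
  rw [← mul_assoc]
  apply mul_le_mul_of_nonneg_right _ (Finset.prod_nonneg fun x _ => (hB _ _).le)
  have := hm _ _ _ _ hσ hab
  linarith

theorem aux_perm {k : ℕ} (B : Fin k → Fin k → ℝ) (hB : ∀ i j, 0 < B i j) (c : ℝ)
    (hc0 : 0 ≤ c) (hc : c < 1)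
    (hm : ∀ i i' j j', i < i' → j < j' → B i' j * B i j' ≤ c * (B i' j' * B i j))
    (σ : Equiv.Perm (Fin k)) (h : σ ≠ 1) :
    ∏ x, B (σ x) x ≤ c * ∏ x, B x x := by
  obtain ⟨τ, hτ⟩ := Finite.exists_max (fun σ : Equiv.Perm (Fin k) => ∏ x, B (σ x) x)
  have hτ1 : τ = 1 := by
    by_contra h1
    obtain ⟨a, b, hab, hs⟩ := aux_inv_s16 τ h1
    have h2 := aux_swap B hB c hm τ a b hab hs
    have h3 := hτ (τ * Equiv.swap a b)
    have h4 : 0 < ∏ x, B (τ x) x := Finset.prod_pos fun x _ => hB _ _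
    nlinarith
  subst hτ1
  obtain ⟨a, b, hab, hs⟩ := aux_inv_s16 σ h
  have h2 := aux_swap B hB c hm σ a b hab hs
  have h3 := hτ (σ * Equiv.swap a b)
  exact h2.trans (mul_le_mul_of_nonneg_left h3 hc0)

theorem aux_sum {k : ℕ} (t : Fin k → ℝ) (j : Fin k) :
    k * ∑ σ : Equiv.Perm (Fin k), t (σ j) = (k.factorial : ℝ) * ∑ i, t i := by
  have h1 : ∀ i, ∑ σ : Equiv.Perm (Fin k), t (σ i) = ∑ σ : Equiv.Perm (Fin k), t (σ j) := by
    intro i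
    rw [← Equiv.sum_comp (Equiv.mulRight (Equiv.swap i j))]
    simp
  have h2 : ∑ i, ∑ σ : Equiv.Perm (Fin k), t (σ i) = k * ∑ σ : Equiv.Perm (Fin k), t (σ j) := by
    simp [h1]
  rw [← h2, Finset.sum_comm]
  simp [Equiv.sum_comp, Fintype.card_perm]

theorem aux_main_s16 {k : ℕ} (hk : 0 < k) (A : Matrix (Fin k) (Fin k) ℝ) (hA : ∀ i j, A i j ≠ 0)
    (c : ℝ) (hcd : c = 1 / ((k + 1).factorial : ℝ))
    (hm : ∀ i i' j j', i < i' → j < j' →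
      |A i' j| * |A i j'| ≤ c * (|A i' j'| * |A i j|))
    (lam : Fin k → ℝ) (j : Fin k) :
    |lam j| ≤ (1 + 1 / (k : ℝ) + 1 / (k : ℝ) ^ 2) *
      ∑ i, |(A.mulVec lam) i| / |A i j| := by
  have hk' : (0 : ℝ) < k := by exact_mod_cast hk
  have hfp : (0 : ℝ) < k.factorial := by exact_mod_cast Nat.factorial_pos k
  have hf1 : (1 : ℝ) ≤ k.factorial := by exact_mod_cast Nat.factorial_pos k
  have hck : c * k.factorial * (k + 1) = 1 := by
    rw [hcd, Nat.factorial_succ]; push_cast; field_simp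
  have hc0 : 0 < c := by rw [hcd]; positivity
  have hc1 : c < 1 := by
    have h1 : c ≤ c * k.factorial := by nlinarith
    have h2 : 0 < c * k.factorial := by positivity
    nlinarith
  have hB : ∀ i j, 0 < |A i j| := fun i j => abs_pos.2 (hA i j)
  have hperm := aux_perm (fun i j => |A i j|) hB c hc0.le hc1 hm
  set P := ∏ x, |A x x| with hP
  have hPp : 0 < P := Finset.prod_pos fun x _ => hB _ _
  set b := A.mulVec lam with hb
  set t : Fin k → ℝ := fun i => |b i| / |A i j| with ht
  have ht0 : ∀ i, 0 ≤ t i := fun i => by positivity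
  set T := ∑ i, t i with hT
  have hT0 : 0 ≤ T := Finset.sum_nonneg fun i _ => ht0 i
  have hcr : A.det * lam j = (A.updateCol j b).det := by
    rw [← Matrix.cramer_apply, hb, Matrix.cramer_eq_adjugate_mulVec, Matrix.mulVec_mulVec,
      Matrix.adjugate_mul, Matrix.smul_mulVec, Matrix.one_mulVec]
    simp
  have hsg : ∀ (σ : Equiv.Perm (Fin k)) (x : ℝ), |Equiv.Perm.sign σ • x| = |x| := by
    intro σ x
    rcases Int.units_eq_one_or (Equiv.Perm.sign σ) with h | h <;> simp [h]
  have hlow : P * k ≤ |A.det| * (k + 1) := by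
    have h1 : A.det = ∏ x, A x x + ∑ σ ∈ Finset.univ.erase (1 : Equiv.Perm (Fin k)),
        Equiv.Perm.sign σ • ∏ i, A (σ i) i := by
      rw [Matrix.det_apply, ← Finset.add_sum_erase _ _ (Finset.mem_univ (1 : Equiv.Perm (Fin k)))]
      simp
    have h2 : |∑ σ ∈ Finset.univ.erase (1 : Equiv.Perm (Fin k)),
        Equiv.Perm.sign σ • ∏ i, A (σ i) i| ≤ (k.factorial - 1) * (c * P) := by
      refine (Finset.abs_sum_le_sum_abs _ _).trans ?_
      refine (Finset.sum_le_card_nsmul _ _ (c * P) ?_).trans ?_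
      · intro σ hσ
        rw [hsg, Finset.abs_prod]
        exact hperm σ (by simpa using hσ)
      · rw [Finset.card_erase_of_mem (Finset.mem_univ _), Finset.card_univ, Fintype.card_perm,
          Fintype.card_fin, nsmul_eq_mul, Nat.cast_sub (Nat.factorial_pos k)]
        simp
    have h3 : P ≤ |A.det| + (k.factorial - 1) * (c * P) := by
      have : P = |∏ x, A x x| := by rw [Finset.abs_prod]
      have h5 : ∏ x, A x x = A.det - ∑ σ ∈ Finset.univ.erase (1 : Equiv.Perm (Fin k)),
        Equiv.Perm.sign σ • ∏ i, A (σ i) i := by rw [h1]; ring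
      have h4 := abs_sub A.det (∑ σ ∈ Finset.univ.erase (1 : Equiv.Perm (Fin k)),
        Equiv.Perm.sign σ • ∏ i, A (σ i) i)
      rw [← h5, ← this] at h4
      linarith
    have h4 : (k.factorial - 1) * (c * P) * (k + 1) ≤ P := by
      have : (k.factorial - 1) * (c * P) * (k + 1) = (c * k.factorial * (k + 1)) * P - c * P * (k + 1) := by ring
      rw [this, hck]
      have : 0 < c * P * (k + 1) := by positivity
      linarith
    nlinarith
  have hup : |(A.updateCol j b).det| ≤ P * T + c * P * ∑ σ : Equiv.Perm (Fin k), t (σ j) := by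
    have hterm : ∀ σ : Equiv.Perm (Fin k),
        |Equiv.Perm.sign σ • ∏ i, (A.updateCol j b) (σ i) i| = t (σ j) * ∏ i, |A (σ i) i| := by
      intro σ
      rw [hsg, Finset.abs_prod, ← Finset.mul_prod_erase _ _ (Finset.mem_univ j),
        ← Finset.mul_prod_erase _ (fun i => |A (σ i) i|) (Finset.mem_univ j), ← mul_assoc]
      congr 1
      · have := (hB (σ j) j).ne'
        simp only [Matrix.updateCol_self, ht]
        field_simp
      · apply Finset.prod_congr rfl
        intro x hx
        rw [Matrix.updateCol_ne (by simpa using hx)]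
    rw [Matrix.det_apply]
    refine (Finset.abs_sum_le_sum_abs _ _).trans ?_
    simp_rw [hterm]
    have hle : ∀ σ : Equiv.Perm (Fin k), t (σ j) * ∏ i, |A (σ i) i| ≤
        (if σ = 1 then P * T else 0) + c * P * t (σ j) := by
      intro σ
      split_ifs with h
      · subst h
        have : t j ≤ T := Finset.single_le_sum (fun i _ => ht0 i) (Finset.mem_univ j)
        have h2 : 0 ≤ c * P * t j := by have := ht0 j; positivity
        simp only [Equiv.Perm.one_apply]
        rw [← hP]
        nlinarith
      · have := mul_le_mul_of_nonneg_left (hperm σ h) (ht0 (σ j))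
        linarith
    refine (Finset.sum_le_sum fun σ _ => hle σ).trans ?_
    rw [Finset.sum_add_distrib, ← Finset.mul_sum]
    simp
  rw [← hcr, abs_mul] at hup
  have hs := aux_sum t j
  set S := ∑ σ : Equiv.Perm (Fin k), t (σ j)
  have hS : c * S * (k * (k + 1)) = T := by
    calc c * S * (k * (k + 1)) = c * (k + 1) * (k * S) := by ring
      _ = (c * k.factorial * (k + 1)) * T := by rw [hs]; ring
      _ = T := by rw [hck, one_mul]
  have hfin : P * (|lam j| * k ^ 2) ≤ P * ((k ^ 2 + k + 1) * T) := by
    calc P * (|lam j| * k ^ 2) = (P * k) * (|lam j| * k) := by ring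
      _ ≤ (|A.det| * (k + 1)) * (|lam j| * k) := by gcongr
      _ = (|A.det| * |lam j|) * (k * (k + 1)) := by ring
      _ ≤ (P * T + c * P * S) * (k * (k + 1)) := by gcongr
      _ = P * T * (k * (k + 1)) + P * (c * S * (k * (k + 1))) := by ring
      _ = P * ((k ^ 2 + k + 1) * T) := by rw [hS]; ring
  have hfin2 := le_of_mul_le_mul_left hfin hPp
  have : (1 + 1 / (k : ℝ) + 1 / (k : ℝ) ^ 2) * T = ((k ^ 2 + k + 1) * T) / k ^ 2 := by
    field_simp
  rw [this, le_div_iff₀ (by positivity)]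
  exact hfin2

/-- Under hypotheses (P): for all real λ_1,…,λ_k, with M = λ_1e_1+…+λ_ke_k, for every
n ≥ n_0 and every j, |λ_j| ≤ (1+1/k+1/k²) · Σ_{i=1}^k |L_{φ^{i-1}(n)}(M)|/|L_{φ^{i-1}(n)}(e_j)|. -/
theorem stmt16
    (k p : ℕ) (hk : 0 < k) (hkp : k < p)
    (e : Fin k → (Fin p → ℝ))
    (L : ℕ → ((Fin p → ℝ) →ₗ[ℝ] ℝ))
    (n0 : ℕ) (hn0 : 1 ≤ n0)
    (hne : ∀ j : Fin k, ∀ n : ℕ, n0 ≤ n → |L n (e j)| ≠ 0)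
    (φ : ℕ → ℕ) (hφ : ∀ n : ℕ, 1 ≤ n → n + 1 ≤ φ n)
    (hcomp : ∀ (i : ℕ) (hi : i + 1 < k), ∀ n : ℕ, n0 ≤ n → ∀ n' : ℕ, φ n ≤ n' →
      |L n' (e ⟨i, by omega⟩)| / |L n (e ⟨i, by omega⟩)| ≤
        (1 / ((k + 1).factorial : ℝ)) *
          (|L n' (e ⟨i + 1, hi⟩)| / |L n (e ⟨i + 1, hi⟩)|))
    :
    ∀ lam : Fin k → ℝ, ∀ n : ℕ, n0 ≤ n → ∀ j : Fin k,
      |lam j| ≤ (1 + 1 / (k : ℝ) + 1 / (k : ℝ) ^ 2) *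
        ∑ i : Fin k,
          |L (φ^[(i : ℕ)] n) (∑ j' : Fin k, lam j' • e j')| /
            |L (φ^[(i : ℕ)] n) (e j)| := by
  intro lam n hn j
  have hmono1 : ∀ m d, n0 ≤ m → m ≤ φ^[d] m := by
    intro m d hm
    induction d with
    | zero => simp
    | succ d ih =>
      rw [Function.iterate_succ_apply']
      have := hφ (φ^[d] m) (by omega)
      omega
  have hmono2 : ∀ a b, a < b → φ (φ^[a] n) ≤ φ^[b] n := by
    intro a b hab
    obtain ⟨d, rfl⟩ := Nat.exists_eq_add_of_lt hab
    have h1 := hmono1 n a hn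
    have h2 := hφ (φ^[a] n) (by omega)
    have h3 := hmono1 (φ (φ^[a] n)) d (by omega)
    rw [← Function.iterate_succ_apply' φ, ← Function.iterate_add_apply] at h3
    rw [← Function.iterate_succ_apply' φ]
    have h4 : a + d + 1 = d + a.succ := by omega
    rw [h4]
    exact h3
  have hge : ∀ a, n0 ≤ φ^[a] n := fun a => hn.trans (hmono1 n a hn)
  have hc1 : (1 / ((k + 1).factorial : ℝ)) ≤ 1 := by
    rw [div_le_one (by positivity)]
    exact_mod_cast Nat.factorial_pos _
  have hc0 : 0 ≤ (1 / ((k + 1).factorial : ℝ)) := by positivity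
  set c := (1 / ((k + 1).factorial : ℝ)) with hc
  have hrat : ∀ m m', n0 ≤ m → φ m ≤ m' → ∀ d i (hi : i + 1 + d < k),
      |L m' (e ⟨i, by omega⟩)| / |L m (e ⟨i, by omega⟩)| ≤
        c * (|L m' (e ⟨i + 1 + d, hi⟩)| / |L m (e ⟨i + 1 + d, hi⟩)|) := by
    intro m m' hm hm' d
    induction d with
    | zero => intro i hi; exact hcomp i hi m hm m' hm'
    | succ d ih =>
      intro i hi
      refine (ih i (by omega)).trans (mul_le_mul_of_nonneg_left ?_ hc0)
      refine (hcomp (i + 1 + d) hi m hm m' hm').trans ?_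
      exact mul_le_of_le_one_left (by positivity) hc1
  have := aux_main_s16 hk (Matrix.of fun i j : Fin k => L (φ^[(i : ℕ)] n) (e j))
    (fun i j => abs_ne_zero.1 (hne j _ (hge _))) c hc ?_ lam j
  · convert this using 5 with i
    · simp [Matrix.mulVec, dotProduct, mul_comm]
    · rfl
  · intro i i' a b hi hab
    obtain ⟨d, hd⟩ := Nat.exists_eq_add_of_lt (Fin.lt_def.1 hab)
    have h := hrat _ _ (hge i) (hmono2 _ _ (Fin.lt_def.1 hi)) d a (by omega)
    have hbe : (⟨(a : ℕ) + 1 + d, by omega⟩ : Fin k) = b := by ext; simp; omega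
    rw [hbe] at h
    have p1 : 0 < |L (φ^[(i : ℕ)] n) (e a)| := lt_of_le_of_ne (abs_nonneg _) (hne a _ (hge _)).symm
    have p2 : 0 < |L (φ^[(i : ℕ)] n) (e b)| := lt_of_le_of_ne (abs_nonneg _) (hne b _ (hge _)).symm
    simp only [Matrix.of_apply]
    rw [← mul_div_assoc, div_le_div_iff₀ p1 p2] at h
    simp only [Fin.eta] at h
    linarith
end

section
/- Assume hypotheses (P). Then for every permutation σ of {1,…,k} and every n ≥ n_0 one has Π_{j=1}^{k} ε_{j, φ^{σ(j)−1}(n)} ≤ η_σ · Π_{j=1}^{k} ε_{j, φ^{j−1}(n)}, where η_σ = 1/(k+1)! if σ is not the identity and η_σ = 1 if σ is the identity, and φ^{m} denotes the m-fold iterate of φ. -/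
open Classical

theorem aux_perm_s17 {k : ℕ} (a : Fin k → ℕ → ℝ) (c : ℝ) (hc0 : 0 ≤ c) (hc1 : c ≤ 1)
    (ha : ∀ j m, 0 < a j m)
    (h : ∀ i j : Fin k, i < j → ∀ m m' : ℕ, m < m' → a i m' * a j m ≤ c * (a i m * a j m')) :
    ∀ (N : ℕ) (σ : Equiv.Perm (Fin k)), σ.support.card = N →
      ∏ j : Fin k, a j (σ j : Fin k) ≤
        (if σ = Equiv.refl (Fin k) then (1 : ℝ) else c) * ∏ j : Fin k, a j (j : ℕ) := by
  intro N
  induction N using Nat.strong_induction_on with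
  | _ N ih =>
  intro σ hσ
  by_cases h1 : σ = Equiv.refl (Fin k)
  · subst h1
    simp
  rw [if_neg h1]
  have hne : σ.support.Nonempty := by
    rw [Finset.nonempty_iff_ne_empty]
    intro h0
    exact h1 (Equiv.Perm.support_eq_empty_iff.1 h0)
  obtain ⟨i, hi, hmin⟩ := σ.support.exists_min_image id hne
  have hi' : σ i ≠ i := Equiv.Perm.mem_support.1 hi
  have hfix : ∀ x, x < i → σ x = x := by
    intro x hx
    by_contra hcon
    exact absurd (hmin x (Equiv.Perm.mem_support.2 hcon)) (not_le.2 hx)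
  have hgt : i < σ i := by
    rcases lt_trichotomy (σ i) i with hlt | heq | hgt
    · exact absurd (σ.injective (hfix _ hlt)) hi'
    · exact absurd heq hi'
    · exact hgt
  obtain ⟨j, hj⟩ := σ.surjective i
  have hij : i < j := by
    rcases lt_trichotomy j i with hlt | heq | hgt
    · have := hfix _ hlt
      rw [hj] at this
      exact absurd this hlt.ne'
    · rw [heq] at hj
      exact absurd hj hi'
    · exact hgt
  have hlt := Equiv.Perm.card_support_swap_mul hi'
  have hI := ih _ (hσ ▸ hlt) (Equiv.swap i (σ i) * σ) rfl
  have hP : 0 ≤ ∏ j : Fin k, a j (j : ℕ) := Finset.prod_nonneg fun j _ => (ha j _).le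
  have hI2 : ∏ x : Fin k, a x ((Equiv.swap i (σ i) * σ) x : Fin k) ≤ ∏ j : Fin k, a j (j : ℕ) := by
    refine hI.trans ?_
    split_ifs
    · simp
    · exact mul_le_of_le_one_left hP hc1
  refine le_trans ?_ (mul_le_mul_of_nonneg_left hI2 hc0)
  have hji : j ∈ Finset.univ.erase i := by simp [hij.ne']
  rw [← Finset.mul_prod_erase _ _ (Finset.mem_univ i), ← Finset.mul_prod_erase _ _ hji,
    ← Finset.mul_prod_erase Finset.univ (fun x => a x ((Equiv.swap i (σ i) * σ) x : Fin k))
      (Finset.mem_univ i), ← Finset.mul_prod_erase _ _ hji]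
  have hrest : ∏ x ∈ (Finset.univ.erase i).erase j, a x ((Equiv.swap i (σ i) * σ) x : Fin k)
      = ∏ x ∈ (Finset.univ.erase i).erase j, a x (σ x : Fin k) := by
    refine Finset.prod_congr rfl fun x hx => ?_
    simp only [Finset.mem_erase, Finset.mem_univ, and_true] at hx
    have e1 : σ x ≠ i := fun hh => hx.1 (σ.injective (hh.trans hj.symm))
    have e2 : σ x ≠ σ i := fun hh => hx.2 (σ.injective hh)
    rw [Equiv.Perm.mul_apply, Equiv.swap_apply_of_ne_of_ne e1 e2]
  rw [hrest]
  have hR : 0 ≤ ∏ x ∈ (Finset.univ.erase i).erase j, a x (σ x : Fin k) :=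
    Finset.prod_nonneg fun x _ => (ha x _).le
  have hk := h i j hij (i : ℕ) (σ i : Fin k) hgt
  simp only [Equiv.Perm.mul_apply, hj, Equiv.swap_apply_left, Equiv.swap_apply_right]
  have := mul_le_mul_of_nonneg_right hk hR
  linarith

/-- Under hypotheses (P): for every permutation σ of {1,…,k} and n ≥ n_0,
Π_j ε_{j,φ^{σ(j)-1}(n)} ≤ η_σ Π_j ε_{j,φ^{j-1}(n)}, with η_σ = 1/(k+1)! for σ ≠ id,
η_id = 1. -/
theorem stmt17
    (k p : ℕ) (hk : 0 < k) (hkp : k < p)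
    (e : Fin k → (Fin p → ℝ))
    (L : ℕ → ((Fin p → ℝ) →ₗ[ℝ] ℝ))
    (n0 : ℕ) (hn0 : 1 ≤ n0)
    (hne : ∀ j : Fin k, ∀ n : ℕ, n0 ≤ n → |L n (e j)| ≠ 0)
    (φ : ℕ → ℕ) (hφ : ∀ n : ℕ, 1 ≤ n → n + 1 ≤ φ n)
    (hcomp : ∀ (i : ℕ) (hi : i + 1 < k), ∀ n : ℕ, n0 ≤ n → ∀ n' : ℕ, φ n ≤ n' →
      |L n' (e ⟨i, by omega⟩)| / |L n (e ⟨i, by omega⟩)| ≤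
        (1 / ((k + 1).factorial : ℝ)) *
          (|L n' (e ⟨i + 1, hi⟩)| / |L n (e ⟨i + 1, hi⟩)|))
    :
    ∀ σ : Equiv.Perm (Fin k), ∀ n : ℕ, n0 ≤ n →
      ∏ j : Fin k, |L (φ^[((σ j : Fin k) : ℕ)] n) (e j)| ≤
        (if σ = Equiv.refl (Fin k) then (1 : ℝ) else 1 / ((k + 1).factorial : ℝ)) *
          ∏ j : Fin k, |L (φ^[(j : ℕ)] n) (e j)| := by
  intro σ n hn
  have hpos : ∀ j : Fin k, ∀ n : ℕ, n0 ≤ n → 0 < |L n (e j)| := fun j n hn =>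
    lt_of_le_of_ne (abs_nonneg _) (hne j n hn).symm
  have hc0 : (0 : ℝ) ≤ 1 / ((k + 1).factorial : ℝ) := by positivity
  have hc1 : 1 / ((k + 1).factorial : ℝ) ≤ 1 := by
    rw [div_le_one (by positivity)]
    exact_mod_cast Nat.succ_le_of_lt (Nat.factorial_pos _)
  have hit : ∀ m, n0 ≤ φ^[m] n := by
    intro m
    induction m with
    | zero => simpa using hn
    | succ m ihm =>
      rw [Function.iterate_succ_apply']
      have := hφ (φ^[m] n) (by omega)
      omega
  have hmono : Monotone fun m => φ^[m] n := by
    refine monotone_nat_of_le_succ fun m => ?_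
    simp only [Function.iterate_succ_apply']
    have := hφ (φ^[m] n) (by have := hit m; omega)
    omega
  have hchain : ∀ (d i : ℕ) (hd : i + d + 1 < k) (n : ℕ), n0 ≤ n → ∀ n' : ℕ, φ n ≤ n' →
      |L n' (e ⟨i, by omega⟩)| / |L n (e ⟨i, by omega⟩)| ≤
        (1 / ((k + 1).factorial : ℝ)) *
          (|L n' (e ⟨i + d + 1, hd⟩)| / |L n (e ⟨i + d + 1, hd⟩)|) := by
    intro d i
    induction d with
    | zero => intro hd n hn n' hn'; exact hcomp i hd n hn n' hn'
    | succ d ihd =>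
      intro hd n hn n' hn'
      refine (ihd (by omega) n hn n' hn').trans (mul_le_mul_of_nonneg_left ?_ hc0)
      refine (hcomp (i + d + 1) (by omega) n hn n' hn').trans ?_
      exact mul_le_of_le_one_left (by positivity) hc1
  have := aux_perm_s17 (fun j m => |L (φ^[m] n) (e j)|) _ hc0 hc1 (fun j m => hpos j _ (hit m)) (by
    intro i j hij m m' hm
    have hle : φ (φ^[m] n) ≤ φ^[m'] n := by
      rw [← Function.iterate_succ_apply' φ]
      exact hmono hm
    obtain ⟨i, hi⟩ := i
    obtain ⟨j, hj⟩ := j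
    obtain ⟨d, rfl⟩ : ∃ d, j = i + d + 1 := ⟨j - i - 1, by
      have : i < j := hij
      omega⟩
    have hh := hchain d i hj (φ^[m] n) (hit m) _ hle
    have p1 := hpos ⟨i, hi⟩ _ (hit m)
    have p2 := hpos ⟨i + d + 1, hj⟩ _ (hit m)
    rw [← mul_div_assoc, div_le_div_iff₀ p1 p2] at hh
    linarith) _ σ rfl
  convert this
end

section
/- Let a be an odd integer, and let r, n be positive integers with 6r ≤ a. Then 0 < S_n ≤ (2^{6(r+1)}/r^{2(a−6r)})^n · Σ_{k=2rn+1}^{∞} 1/k^a. -/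
open scoped BigOperators

/-- Real Pochhammer product: (x)_m = x(x+1)⋯(x+m−1). -/
noncomputable def poch (x : ℝ) (m : ℕ) : ℝ := ∏ j ∈ Finset.range m, (x + j)

/-- The rational function of t appearing in the series defining S_n. -/
noncomputable def Sfun (a r n : ℕ) : ℝ → ℝ := fun t =>
  (poch (t - ((2 * r + 1) * n : ℕ)) (2 * r * n)) ^ 3 *
    (poch (t + (n : ℕ) + 1) (2 * r * n)) ^ 3 /
      (poch (t - (n : ℕ)) (2 * n + 1)) ^ a

/-- S_n = (2n)!^{a−6r} Σ_{t=n+1}^∞ (t−(2r+1)n)_{2rn}³ (t+n+1)_{2rn}³ / (t−n)_{2n+1}^a. -/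
noncomputable def S (a r n : ℕ) : ℝ :=
  ((2 * n).factorial : ℝ) ^ (a - 6 * r) * ∑' m : ℕ, Sfun a r n ((n : ℝ) + 1 + m)

lemma poch_pos {x : ℝ} (hx : 0 < x) (m : ℕ) : 0 < poch x m :=
  Finset.prod_pos fun i _ => by positivity

lemma poch_reflect (x : ℝ) (m : ℕ) : poch (x - m) m = ∏ j ∈ Finset.range m, (x - 1 - j) := by
  unfold poch
  rw [← Finset.prod_range_reflect]
  refine Finset.prod_congr rfl fun j hj => ?_
  have hj' := Finset.mem_range.mp hj
  have : ((m - 1 - j : ℕ) : ℝ) = m - 1 - j := by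
    rw [Nat.cast_sub (by omega), Nat.cast_sub (by omega)]; simp
  rw [this]; ring

lemma PQ_le (x : ℝ) (r n : ℕ) (hx : (2 * r * n : ℕ) < x) :
    poch (x - (2 * r * n : ℕ)) (2 * r * n) * poch (x + 2 * n + 1) (2 * r * n)
      ≤ (x * (x + 2 * n)) ^ (2 * r * n) := by
  have hx0 : 0 < x := lt_of_le_of_lt (Nat.cast_nonneg _) hx
  rw [poch_reflect]
  unfold poch
  rw [← Finset.prod_mul_distrib]
  calc _ ≤ ∏ j ∈ Finset.range (2 * r * n), (x * (x + 2 * n)) := by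
        refine Finset.prod_le_prod (fun j hj => ?_) (fun j hj => ?_)
        · have h1 : (j : ℝ) + 1 ≤ (2 * r * n : ℕ) := by
            exact_mod_cast Finset.mem_range.mp hj
          have : 0 ≤ x - 1 - j := by linarith
          positivity
        · have : (0:ℝ) ≤ (1 + j) * (2 * n + 1 + j) := by positivity
          nlinarith
    _ = _ := by simp

lemma E_sq (x : ℝ) (n : ℕ) (hx : 0 < x) :
    (x * (x + 2 * n)) ^ (2 * n) ≤ poch (x + 1) (2 * n) ^ 2 := by
  have h : poch (x + 1) (2 * n) = ∏ j ∈ Finset.range (2 * n), (x + 2 * n - j) := by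
    have := poch_reflect (x + 1 + 2 * n) (2 * n)
    push_cast at this
    rw [show x + 1 + 2 * (n:ℝ) - 2 * n = x + 1 by ring] at this
    rw [this]
    exact Finset.prod_congr rfl fun j _ => by ring
  rw [sq]
  nth_rw 2 [h]
  unfold poch
  rw [← Finset.prod_mul_distrib]
  calc _ = ∏ j ∈ Finset.range (2 * n), (x * (x + 2 * n)) := by simp
    _ ≤ _ := by
        refine Finset.prod_le_prod (fun j hj => by positivity) (fun j hj => ?_)
        have h1 : (j : ℝ) + 1 ≤ (2 * n : ℕ) := by
          exact_mod_cast Finset.mem_range.mp hj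
        push_cast at h1
        have : (0:ℝ) ≤ (1 + j) * (2 * n - j) := by
          apply mul_nonneg <;> [positivity; linarith]
        nlinarith

lemma E_fact (x : ℝ) (r n : ℕ) (hx : (2 * r * n : ℕ) < x) :
    (r : ℝ) ^ (2 * n) * (2 * n).factorial ≤ poch (x + 1) (2 * n) := by
  rw [← Finset.prod_range_add_one_eq_factorial]
  push_cast
  unfold poch
  calc _ = ∏ j ∈ Finset.range (2 * n), ((r : ℝ) * (j + 1)) := by
        rw [Finset.prod_mul_distrib]; simp
    _ ≤ _ := by
        refine Finset.prod_le_prod (fun j hj => by positivity) (fun j hj => ?_)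
        have h1 : (j : ℝ) + 1 ≤ (2 * n : ℕ) := by
          exact_mod_cast Finset.mem_range.mp hj
        push_cast at h1 hx
        have h2 := mul_le_mul_of_nonneg_left h1 (Nat.cast_nonneg (α := ℝ) r)
        have h3 : (0:ℝ) ≤ j := Nat.cast_nonneg j
        nlinarith

lemma poch_head (x : ℝ) (m : ℕ) : poch x (m + 1) = x * poch (x + 1) m := by
  unfold poch
  rw [Finset.prod_range_succ', mul_comm]
  congr 1
  · simp
  · exact Finset.prod_congr rfl fun j _ => by push_cast; ring

lemma term_bound (a r n : ℕ) (hr : 1 ≤ r) (hra : 6 * r ≤ a) (x : ℝ)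
    (hx : (2 * r * n : ℕ) < x) :
    ((2 * n).factorial : ℝ) ^ (a - 6 * r) *
      (poch (x - (2 * r * n : ℕ)) (2 * r * n) ^ 3 * poch (x + 2 * n + 1) (2 * r * n) ^ 3 /
        poch x (2 * n + 1) ^ a)
      ≤ ((2 : ℝ) ^ (6 * (r + 1)) / (r : ℝ) ^ (2 * (a - 6 * r))) ^ n * (1 / x ^ a) := by
  have hx0 : 0 < x := lt_of_le_of_lt (Nat.cast_nonneg _) hx
  have hr0 : (0:ℝ) < r := by exact_mod_cast hr
  have h1 := PQ_le x r n hx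
  have h2 := E_sq x n hx0
  have h3 := E_fact x r n hx
  have hP : 0 < poch (x - (2 * r * n : ℕ)) (2 * r * n) := poch_pos (by linarith) _
  have hQ : 0 < poch (x + 2 * n + 1) (2 * r * n) := poch_pos (by positivity) _
  have hE : 0 < poch (x + 1) (2 * n) := poch_pos (by positivity) _
  rw [poch_head]
  generalize poch (x - (2 * r * n : ℕ)) (2 * r * n) = P at *
  generalize poch (x + 2 * n + 1) (2 * r * n) = Q at *
  generalize poch (x + 1) (2 * n) = E at *
  obtain ⟨b, rfl⟩ := Nat.exists_eq_add_of_le hra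
  rw [Nat.add_sub_cancel_left]
  have h4 : P * Q ≤ E ^ (2 * r) := by
    calc P * Q ≤ _ := h1
      _ = ((x * (x + 2 * n)) ^ (2 * n)) ^ r := by rw [← pow_mul]; congr 1; ring
      _ ≤ (E ^ 2) ^ r := by gcongr
      _ = _ := by rw [← pow_mul]
  have h5 : P ^ 3 * Q ^ 3 ≤ E ^ (6 * r) := by
    calc P ^ 3 * Q ^ 3 = (P * Q) ^ 3 := by ring
      _ ≤ (E ^ (2 * r)) ^ 3 := by gcongr
      _ = _ := by rw [← pow_mul]; congr 1; ring
  have h6 : ((r : ℝ) ^ (2 * n) * (2 * n).factorial) ^ b ≤ E ^ b := by gcongr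
  have h7 : (1:ℝ) ≤ (2 ^ (6 * (r + 1))) ^ n :=
    one_le_pow₀ (one_le_pow₀ (by norm_num))
  rw [div_pow, div_mul_div_comm, mul_one, ← mul_div_assoc,
    div_le_div_iff₀ (by positivity) (by positivity)]
  rw [mul_pow]
  have e : ((r:ℝ) ^ (2 * b)) ^ n = (r ^ (2 * n)) ^ b := by
    rw [← pow_mul, ← pow_mul]; congr 1; ring
  rw [e]
  calc _ = ((r : ℝ) ^ (2 * n) * (2 * n).factorial) ^ b * (P ^ 3 * Q ^ 3) * x ^ (6 * r + b) := by
        rw [mul_pow]; ring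
    _ ≤ E ^ b * E ^ (6 * r) * x ^ (6 * r + b) := by gcongr
    _ = 1 * (x ^ (6 * r + b) * E ^ (6 * r + b)) := by ring
    _ ≤ _ := by gcongr

/-- For odd a and positive integers r, n with 6r ≤ a:
0 < S_n ≤ (2^{6(r+1)}/r^{2(a−6r)})^n · Σ_{k=2rn+1}^∞ 1/k^a. -/
theorem stmt19 (a r n : ℕ) (ha : Odd a) (hr : 1 ≤ r) (hn : 1 ≤ n) (hra : 6 * r ≤ a) :
    0 < S a r n ∧
      S a r n ≤ ((2 : ℝ) ^ (6 * (r + 1)) / (r : ℝ) ^ (2 * (a - 6 * r))) ^ n *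
        ∑' m : ℕ, 1 / ((2 * r * n + 1 + m : ℕ) : ℝ) ^ a := by
  have hzero : ∀ m ∈ Finset.range (2 * r * n), Sfun a r n ((n : ℝ) + 1 + m) = 0 := by
    intro m hm
    have hm' := Finset.mem_range.mp hm
    have : poch ((n : ℝ) + 1 + m - ((2 * r + 1) * n : ℕ)) (2 * r * n) = 0 := by
      unfold poch
      refine Finset.prod_eq_zero (i := 2 * r * n - 1 - m) (Finset.mem_range.mpr (by omega)) ?_
      rw [Nat.cast_sub (by omega), Nat.cast_sub (by omega)]
      push_cast; ring
    unfold Sfun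
    simp only [this]
    simp
  have hshift : ∀ j : ℕ, Sfun a r n ((n : ℝ) + 1 + (j + 2 * r * n : ℕ)) =
      poch (((2 * r * n + 1 + j : ℕ) : ℝ) - (2 * r * n : ℕ)) (2 * r * n) ^ 3 *
        poch (((2 * r * n + 1 + j : ℕ) : ℝ) + 2 * n + 1) (2 * r * n) ^ 3 /
        poch ((2 * r * n + 1 + j : ℕ) : ℝ) (2 * n + 1) ^ a := by
    intro j
    unfold Sfun
    congr 3
    · congr 1; push_cast; ring
    · congr 2; push_cast; ring
    · congr 1; push_cast; ring
  have hlt : ∀ j : ℕ, ((2 * r * n : ℕ) : ℝ) < ((2 * r * n + 1 + j : ℕ) : ℝ) := by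
    intro j; exact_mod_cast (by omega)
  have hpos : ∀ j : ℕ, 0 < Sfun a r n ((n : ℝ) + 1 + (j + 2 * r * n : ℕ)) := by
    intro j
    rw [hshift]
    have h0 := hlt j
    have hx0 : (0:ℝ) < ((2 * r * n + 1 + j : ℕ) : ℝ) := lt_of_le_of_lt (Nat.cast_nonneg _) h0
    have hP := poch_pos (sub_pos.mpr h0) (2 * r * n)
    have hQ : 0 < poch (((2 * r * n + 1 + j : ℕ) : ℝ) + 2 * n + 1) (2 * r * n) :=
      poch_pos (by positivity) _
    have hD := poch_pos hx0 (2 * n + 1)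
    positivity
  have hF : (0:ℝ) < ((2 * n).factorial : ℝ) ^ (a - 6 * r) := by positivity
  have hb : ∀ j : ℕ, ((2 * n).factorial : ℝ) ^ (a - 6 * r) *
      Sfun a r n ((n : ℝ) + 1 + (j + 2 * r * n : ℕ)) ≤
      ((2 : ℝ) ^ (6 * (r + 1)) / (r : ℝ) ^ (2 * (a - 6 * r))) ^ n *
        (1 / ((2 * r * n + 1 + j : ℕ) : ℝ) ^ a) := by
    intro j
    rw [hshift]
    exact term_bound a r n hr hra _ (hlt j)
  have hs : Summable fun j : ℕ => 1 / ((2 * r * n + 1 + j : ℕ) : ℝ) ^ a := by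
    have h := (summable_nat_add_iff (2 * r * n + 1)).mpr
      (Real.summable_one_div_nat_pow.mpr (show 1 < a by omega))
    simpa only [add_comm] using h
  have hs2 := hs.mul_left (((2 : ℝ) ^ (6 * (r + 1)) / (r : ℝ) ^ (2 * (a - 6 * r))) ^ n)
  have hs3 : Summable fun j : ℕ => ((2 * n).factorial : ℝ) ^ (a - 6 * r) *
      Sfun a r n ((n : ℝ) + 1 + (j + 2 * r * n : ℕ)) :=
    Summable.of_nonneg_of_le (fun j => (mul_pos hF (hpos j)).le) hb hs2
  have hs4 := (summable_mul_left_iff hF.ne').mp hs3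
  have hs5 : Summable fun m : ℕ => Sfun a r n ((n : ℝ) + 1 + m) :=
    (summable_nat_add_iff (f := fun m : ℕ => Sfun a r n ((n : ℝ) + 1 + m)) (2 * r * n)).mp hs4
  have hS : S a r n = ∑' j : ℕ, ((2 * n).factorial : ℝ) ^ (a - 6 * r) *
      Sfun a r n ((n : ℝ) + 1 + (j + 2 * r * n : ℕ)) := by
    unfold S
    rw [← hs5.sum_add_tsum_nat_add (2 * r * n), Finset.sum_eq_zero hzero, zero_add, tsum_mul_left]
  rw [hS]
  refine ⟨hs3.tsum_pos (fun j => (mul_pos hF (hpos j)).le) 0 (mul_pos hF (hpos 0)), ?_⟩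
  rw [← tsum_mul_left]
  exact hs3.tsum_le_tsum hb hs2
end
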